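/- Full abstraction of HOcore w.r.t. normal-form bisimilarity of the call-by-value lambda-calculus: for all open call-by-value lambda-terms t and s, t ~nf s if and only if there exists n > max(fv(t) ∪ fv(s)) such that [[<t | [] | n>_ev]] and [[<s | [] | n>_ev]] are barbed equivalent w.r.t. H. -/

import Mathlib

/-! ### HOcore: syntax, LTS, barbs, barbed bisimilarity -/

/-- Channel names of HOcore. -/
abbrev Name := ℕ

/-- HOcore processes, with de Bruijn indices for process variables. -/
inductive Proc : Type
  | nil : Proc
  | pvar : ℕ → Proc
  | par : Proc → Proc → Proc
  | inp : Name → Proc → Proc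
  | out : Name → Proc → Proc
  deriving DecidableEq

namespace Proc

/-- Shift the free de Bruijn indices `≥ k` by `d`. -/
def lift (d : ℕ) : ℕ → Proc → Proc
  | _, nil => nil
  | k, pvar n => if n < k then pvar n else pvar (n + d)
  | k, par P Q => par (lift d k P) (lift d k Q)
  | k, inp a P => inp a (lift d (k + 1) P)
  | k, out a P => out a (lift d k P)

/-- Capture-avoiding substitution of `S` for the de Bruijn index `k` in `P`. -/
def subst : Proc → ℕ → Proc → Proc
  | nil, _, _ => nil
  | pvar n, k, S => if n = k then lift k 0 S else if k < n then pvar (n - 1) else pvar n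
  | par P Q, k, S => par (subst P k S) (subst Q k S)
  | inp a P, k, S => inp a (subst P (k + 1) S)
  | out a P, k, S => out a (subst P k S)

/-- Free channel names of a process. -/
def fnames : Proc → Finset Name
  | nil => ∅
  | pvar _ => ∅
  | par P Q => fnames P ∪ fnames Q
  | inp a P => insert a (fnames P)
  | out a P => insert a (fnames P)

end Proc

/-- Labels of the HOcore LTS: internal step, output, input. -/
inductive Label
  | tau : Label
  | outl : Name → Proc → Label
  | inl : Name → Proc → Label

/-- Structural congruence: parallel composition is associative, commutative,
and has `nil` as a neutral element. -/
inductive SCong : Proc → Proc → Prop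
  | refl (P) : SCong P P
  | symm {P Q} : SCong P Q → SCong Q P
  | trans {P Q R} : SCong P Q → SCong Q R → SCong P R
  | parComm (P Q) : SCong (.par P Q) (.par Q P)
  | parAssoc (P Q R) : SCong (.par (.par P Q) R) (.par P (.par Q R))
  | parNil (P) : SCong (.par P .nil) P
  | parCong {P P' Q Q'} : SCong P P' → SCong Q Q' → SCong (.par P Q) (.par P' Q')
  | inpCong {P P'} (a) : SCong P P' → SCong (.inp a P) (.inp a P')
  | outCong {P P'} (a) : SCong P P' → SCong (.out a P) (.out a P')

/-- The labeled transition system of HOcore (processes are considered up to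
structural congruence). -/
inductive Step : Proc → Label → Proc → Prop
  | outS (a P) : Step (.out a P) (.outl a P) .nil
  | inpS (a Q P) : Step (.inp a Q) (.inl a P) (Q.subst 0 P)
  | parL {P l P'} (Q) : Step P l P' → Step (.par P Q) l (.par P' Q)
  | parR {Q l Q'} (P) : Step Q l Q' → Step (.par P Q) l (.par P Q')
  | comm1 {P Q P' Q' a R} : Step P (.outl a R) P' → Step Q (.inl a R) Q' →
      Step (.par P Q) .tau (.par P' Q')
  | comm2 {P Q P' Q' a R} : Step P (.inl a R) P' → Step Q (.outl a R) Q' →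
      Step (.par P Q) .tau (.par P' Q')
  | struct {P P' l Q Q'} : SCong P P' → Step P' l Q' → SCong Q' Q → Step P l Q

/-- One internal step. -/
def TauStep (P Q : Proc) : Prop := Step P Label.tau Q

/-- Weak internal transition `==tau==>`. -/
def WTau : Proc → Proc → Prop := Relation.ReflTransGen TauStep

/-- Observables: input on a name, or output on a name (a coname). -/
inductive Barb
  | inb : Name → Barb
  | outb : Name → Barb
  deriving DecidableEq

/-- Strong observable action w.r.t. a set `H` of hidden names. -/
def StrongBarb (H : Set Name) (P : Proc) : Barb → Prop
  | .inb a => a ∉ H ∧ ∃ Q R, Step P (Label.inl a Q) R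
  | .outb a => a ∉ H ∧ ∃ Q R, Step P (Label.outl a Q) R

/-- Weak observable action w.r.t. a set `H` of hidden names. -/
def WeakBarb (H : Set Name) (P : Proc) (α : Barb) : Prop :=
  ∃ P', WTau P P' ∧ StrongBarb H P' α

/-- Barbed bisimulation w.r.t. the hidden names `H`. -/
def IsBarbedBisim (H : Set Name) (R : Proc → Proc → Prop) : Prop :=
  Symmetric R ∧ ∀ P Q, R P Q →
    (∀ α, StrongBarb H P α → WeakBarb H Q α) ∧
    (∀ S : Proc, ((S.fnames : Set Name) ∩ H = ∅) → R (.par P S) (.par Q S)) ∧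
    (∀ P', Step P Label.tau P' → ∃ Q', WTau Q Q' ∧ R P' Q')

/-- Barbed equivalence w.r.t. the hidden names `H`. -/
def BarbedEquiv (H : Set Name) (P Q : Proc) : Prop :=
  ∃ R, IsBarbedBisim H R ∧ R P Q
/-! ### The open call-by-value lambda-calculus and the CK machine -/

/-- Call-by-value lambda-terms: free variables `fvar f` (natural numbers) and
bound variables in de Bruijn representation. -/
inductive CTm
  | fvar : ℕ → CTm
  | bvar : ℕ → CTm
  | lam : CTm → CTm
  | app : CTm → CTm → CTm
  deriving DecidableEq

namespace CTm

/-- Shift the de Bruijn indices `≥ k` by `d`. -/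
def liftC (d : ℕ) : ℕ → CTm → CTm
  | _, fvar f => fvar f
  | k, bvar n => if n < k then bvar n else bvar (n + d)
  | k, lam t => lam (liftC d (k + 1) t)
  | k, app t s => app (liftC d k t) (liftC d k s)

/-- Capture-avoiding substitution of `s` for the de Bruijn index `k`. -/
def substC : CTm → ℕ → CTm → CTm
  | fvar f, _, _ => fvar f
  | bvar n, k, s => if n = k then liftC k 0 s else if k < n then bvar (n - 1) else bvar n
  | lam t, k, s => lam (substC t (k + 1) s)
  | app t u, k, s => app (substC t k s) (substC u k s)

end CTm

/-- Free variables of a term. -/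
def fvC : CTm → Finset ℕ
  | .fvar f => {f}
  | .bvar _ => ∅
  | .lam t => fvC t
  | .app t s => fvC t ∪ fvC s

/-- Values: free variables, variables, and lambda-abstractions. -/
def CIsVal : CTm → Prop
  | .app _ _ => False
  | _ => True

/-- Stack items: an argument `arg(t)` or an already evaluated function `fun(v)`. -/
inductive CItem
  | argI : CTm → CItem
  | funI : CTm → CItem

/-- Stacks of the CK machine. -/
abbrev CStack := List CItem

def fvItem : CItem → Finset ℕ
  | .argI t => fvC t
  | .funI v => fvC v

def fvSt : CStack → Finset ℕ
  | [] => ∅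
  | i :: π => fvItem i ∪ fvSt π

/-- Configurations of the CK machine: evaluation mode `<t | π>` and
continuation mode `<π | v>`. -/
inductive CKConf
  | ev : CTm → CStack → CKConf
  | cont : CStack → CTm → CKConf

/-- Transitions of the CK machine. -/
inductive CKStep : CKConf → CKConf → Prop
  | fn {t s π} : CKStep (.ev (.app t s) π) (.ev t (.argI s :: π))
  | switch {v π} : CIsVal v → CKStep (.ev v π) (.cont π v)
  | arg {t π v} : CKStep (.cont (.argI t :: π) v) (.ev t (.funI v :: π))
  | beta {t π v} : CKStep (.cont (.funI (.lam t) :: π) v) (.ev (t.substC 0 v) π)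

/-- Reflexive-transitive closure of CK transitions. -/
def CKSteps : CKConf → CKConf → Prop := Relation.ReflTransGen CKStep

/-! ### Call-by-value normal-form bisimilarity -/

/-- Call-by-value normal-form bisimulation, on CK configurations. -/
def IsNFBisimV (R : CKConf → CKConf → Prop) : Prop :=
  Symmetric R ∧ ∀ C C', R C C' →
    (∀ v, CKSteps C (.cont [] v) →
      ∃ v', CKSteps C' (.cont [] v') ∧
        ∀ f, f ∉ fvC v ∪ fvC v' →
          R (.cont [.funI v] (.fvar f)) (.cont [.funI v'] (.fvar f))) ∧
    (∀ f π v, CKSteps C (.cont (.funI (.fvar f) :: π) v) →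
      ∃ π' v', CKSteps C' (.cont (.funI (.fvar f) :: π') v') ∧
        ∀ f', f' ∉ fvC v ∪ fvC v' ∪ fvSt π ∪ fvSt π' →
          R (.cont [.funI v] (.fvar f')) (.cont [.funI v'] (.fvar f')) ∧
          R (.cont π (.fvar f')) (.cont π' (.fvar f')))

/-- Call-by-value normal-form bisimilarity. -/
def NFBisimV (C C' : CKConf) : Prop := ∃ R, IsNFBisimV R ∧ R C C'

/-! ### The call-by-value NFB machine -/

/-- Flags of the call-by-value NFB machine. -/
inductive CNFlag
  | flam | fval | fctx
  | fvarF : ℕ → CNFlag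
  deriving DecidableEq

/-- Labels of the call-by-value NFB machine. -/
inductive CNLabel
  | tau : CNLabel
  | flag : CNFlag → CNLabel

/-- Configurations of the call-by-value NFB machine; the `stuck` mode is the
intermediate state between the two flags of the `Stuck-Val` and `Stuck-Context`
steps. -/
inductive CNConf
  | ev : CTm → CStack → ℕ → CNConf
  | cont : CStack → CTm → ℕ → CNConf
  | stuck : CStack → CTm → ℕ → CNConf

/-- Transitions of the call-by-value NFB machine. -/
inductive CNStep : CNConf → CNLabel → CNConf → Prop
  | fn {t s π n} : CNStep (.ev (.app t s) π n) .tau (.ev t (.argI s :: π) n)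
  | switch {v π n} : CIsVal v → CNStep (.ev v π n) .tau (.cont π v n)
  | arg {t π v n} : CNStep (.cont (.argI t :: π) v n) .tau (.ev t (.funI v :: π) n)
  | beta {t π v n} :
      CNStep (.cont (.funI (.lam t) :: π) v n) .tau (.ev (t.substC 0 v) π n)
  | val {v n} : CNStep (.cont [] v n) (.flag .flam) (.cont [.funI v] (.fvar n) (n + 1))
  | stuckFlag {f π v n} :
      CNStep (.cont (.funI (.fvar f) :: π) v n) (.flag (.fvarF f)) (.stuck π v n)
  | stuckVal {π v n} :
      CNStep (.stuck π v n) (.flag .fval) (.cont [.funI v] (.fvar n) (n + 1))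
  | stuckCtx {π v n} :
      CNStep (.stuck π v n) (.flag .fctx) (.cont π (.fvar n) (n + 1))

/-- Silent transitions of the call-by-value NFB machine. -/
def CNTau (C C' : CNConf) : Prop := CNStep C .tau C'

/-- Flagged transitions of the call-by-value NFB machine. -/
def CNFlagStep (C : CNConf) (F : CNFlag) (C' : CNConf) : Prop := CNStep C (.flag F) C'

/-- The call-by-value NFB machine has no terminating flagged transitions. -/
def CNFinal : CNConf → CNFlag → Prop := fun _ _ => False

/-! ### Translation of the call-by-value NFB machine into HOcore -/

def cN : Name := 0
def val0N : Name := 1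
def bN : Name := 2
def kN : Name := 3
def sucN : Name := 4
def zN : Name := 5
def chN : Name := 6
def lamF : Name := 7
def valF : Name := 8
def ctxF : Name := 9

/-- Translation of the empty stack: `[[ [] ]] = b(x).x`. -/
def trMtV : Proc := .inp bN (.pvar 0)

/-- `Fun(P, Q) = P || c!<Q>`. -/
def FunP (P Q : Proc) : Proc := .par P (.out cN Q)

/-- `Arg(P, Q) = val0(x).b(_).(P || c!<Fun(x, Q)>)`. -/
def ArgV (P Q : Proc) : Proc :=
  .inp val0N (.inp bN (.par (P.lift 2 0) (.out cN (FunP (.pvar 1) (Q.lift 2 0)))))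

/-- `Restart = lam(_).val0(x).k(y).(Fun(x, [[ [] ]]) || val0!<y> || k!<suc(_).y> || b!<0>)`. -/
def RestartV : Proc :=
  .inp lamF (.inp val0N (.inp kN (.par (FunP (.pvar 1) trMtV)
    (.par (.out val0N (.pvar 0))
      (.par (.out kN (.inp sucN (.pvar 1))) (.out bN .nil))))))

/-- Internal choice `P + Q = ch!<P> || ch!<Q> || ch(x).ch(_).x`. -/
def choicePlus (P Q : Proc) : Proc :=
  .par (.out chN P) (.par (.out chN Q) (.inp chN (.inp chN (.pvar 1))))

/-- `Choice(Pv, Pπ, Pn) = val(_).(Fun(Pv, [[ [] ]]) || val0!<Pn> || k!<suc(_).Pn>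
|| b!<Restart>) + ctx(_).(Pπ || val0!<Pn> || k!<suc(_).Pn> || b!<Restart>)`. -/
def ChoiceV (Pv Pπ Pn : Proc) : Proc :=
  choicePlus
    (.inp valF (.par (FunP (Pv.lift 1 0) trMtV)
      (.par (.out val0N (Pn.lift 1 0))
        (.par (.out kN (.inp sucN (Pn.lift 2 0))) (.out bN RestartV)))))
    (.inp ctxF (.par (Pπ.lift 1 0)
      (.par (.out val0N (Pn.lift 1 0))
        (.par (.out kN (.inp sucN (Pn.lift 2 0))) (.out bN RestartV)))))

/-- Translation `<<f>>` of a free variable (also used for the counter):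
`<<0>> = z(_).val0(x).c(p).k(y).b(_).Choice(x, p, y)` and `<<f+1>> = suc(_).<<f>>`. -/
def trFVV : ℕ → Proc
  | 0 => .inp zN (.inp val0N (.inp cN (.inp kN (.inp bN
      (ChoiceV (.pvar 3) (.pvar 2) (.pvar 1))))))
  | f + 1 => .inp sucN (trFVV f)

/-- Translation `[[t]]` of terms. -/
def trCV : CTm → Proc
  | .fvar f =>
      .inp cN (.par (.pvar 0)
        (.par (.out val0N ((trFVV f).lift 1 0)) (.out bN RestartV)))
  | .bvar n =>
      .inp cN (.par (.pvar 0) (.par (.out val0N (.pvar (n + 1))) (.out bN RestartV)))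
  | .lam t =>
      .inp cN (.par (.pvar 0)
        (.par (.out val0N ((Proc.inp val0N (.inp bN ((trCV t).lift 1 0))).lift 1 0))
          (.out bN RestartV)))
  | .app t s =>
      .inp cN (.par ((trCV t).lift 1 0) (.out cN (ArgV ((trCV s).lift 1 0) (.pvar 0))))

/-- Translation `(v)` of values. -/
def trVV : CTm → Proc
  | .fvar f => trFVV f
  | .bvar n => .pvar n
  | .lam t => .inp val0N (.inp bN ((trCV t).lift 1 0))
  | .app _ _ => .nil

/-- Translation of stacks. -/
def trStV : CStack → Proc
  | [] => trMtV
  | .argI t :: π => ArgV (trCV t) (trStV π)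
  | .funI v :: π => FunP (trVV v) (trStV π)

/-- Translation `[[<t | π | n>_ev]]` of evaluation-mode configurations. -/
def trEvV (t : CTm) (π : CStack) (n : ℕ) : Proc :=
  .par (trCV t) (.par (.out cN (trStV π)) (.out kN (trFVV n)))

/-- The hidden names: names of the translation that are not flag names
(the flag names being `lam`, `val`, `ctx`, `suc`, `z`). -/
def HSetV : Set Name := {cN, val0N, bN, kN, chN}


namespace HO

open Proc

/-! #### Structural congruence and substitution -/

theorem scong_lift {P Q : Proc} (h : SCong P Q) : ∀ d k, SCong (P.lift d k) (Q.lift d k) := by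
  induction h with
  | refl P => intro d k; exact .refl _
  | symm _ ih => intro d k; exact .symm (ih d k)
  | trans _ _ ih1 ih2 => intro d k; exact .trans (ih1 d k) (ih2 d k)
  | parComm P Q => intro d k; exact .parComm _ _
  | parAssoc P Q R => intro d k; exact .parAssoc _ _ _
  | parNil P => intro d k; exact .parNil _
  | parCong _ _ ih1 ih2 => intro d k; exact .parCong (ih1 d k) (ih2 d k)
  | inpCong a _ ih => intro d k; exact .inpCong a (ih d (k + 1))
  | outCong a _ ih => intro d k; exact .outCong a (ih d k)

theorem scong_subst_left {P Q : Proc} (h : SCong P Q) :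
    ∀ k S, SCong (P.subst k S) (Q.subst k S) := by
  induction h with
  | refl P => intro d k; exact .refl _
  | symm _ ih => intro d k; exact .symm (ih d k)
  | trans _ _ ih1 ih2 => intro d k; exact .trans (ih1 d k) (ih2 d k)
  | parComm P Q => intro d k; exact .parComm _ _
  | parAssoc P Q R => intro d k; exact .parAssoc _ _ _
  | parNil P => intro d k; exact .parNil _
  | parCong _ _ ih1 ih2 => intro d k; exact .parCong (ih1 d k) (ih2 d k)
  | inpCong a _ ih => intro d k; exact .inpCong a (ih (d + 1) k)
  | outCong a _ ih => intro d k; exact .outCong a (ih d k)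

theorem scong_subst_right {S S' : Proc} (h : SCong S S') (P : Proc) :
    ∀ k, SCong (P.subst k S) (P.subst k S') := by
  induction P with
  | nil => intro k; exact .refl _
  | pvar n =>
    intro k
    simp only [subst]
    split_ifs
    · exact scong_lift h _ _
    · exact .refl _
    · exact .refl _
  | par P Q ih1 ih2 => intro k; exact .parCong (ih1 k) (ih2 k)
  | inp a P ih => intro k; exact .inpCong a (ih _)
  | out a P ih => intro k; exact .outCong a (ih _)

instance procSetoid : Setoid Proc where
  r := SCong
  iseqv := ⟨.refl, .symm, .trans⟩

/-- Processes up to structural congruence. -/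
abbrev PQ := Quotient procSetoid

/-- Class of a process. -/
def cl (P : Proc) : PQ := Quotient.mk procSetoid P

theorem cl_eq {P Q : Proc} : cl P = cl Q ↔ SCong P Q := Quotient.eq (r := procSetoid)

instance : Add PQ := ⟨Quotient.map₂ Proc.par (fun _ _ h _ _ h' => SCong.parCong h h')⟩
instance : Zero PQ := ⟨cl .nil⟩

theorem cl_par (P Q : Proc) : cl (.par P Q) = cl P + cl Q := rfl
theorem cl_nil : cl .nil = 0 := rfl

theorem pq_add_comm (a b : PQ) : a + b = b + a := by
  induction a using Quotient.inductionOn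
  induction b using Quotient.inductionOn
  exact cl_eq.2 (.parComm _ _)

theorem pq_add_zero (a : PQ) : a + 0 = a := by
  induction a using Quotient.inductionOn
  exact cl_eq.2 (.parNil _)

instance : AddCommMonoid PQ where
  add_assoc a b c := by
    induction a using Quotient.inductionOn
    induction b using Quotient.inductionOn
    induction c using Quotient.inductionOn
    exact cl_eq.2 (.parAssoc _ _ _)
  zero_add a := by rw [pq_add_comm]; exact pq_add_zero a
  add_zero := pq_add_zero
  add_comm := pq_add_comm
  nsmul := nsmulRec

/-- Prime components of a process. -/
inductive Cmp
  | cin : Name → PQ → Cmp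
  | cout : Name → PQ → Cmp
  | cvar : ℕ → Cmp

open Cmp

/-- Soups of components. -/
abbrev Soup := Multiset Cmp

/-- The components of a process. -/
def comps : Proc → Soup
  | .nil => 0
  | .pvar n => {cvar n}
  | .par P Q => comps P + comps Q
  | .inp a P => {cin a (cl P)}
  | .out a P => {cout a (cl P)}

theorem comps_scong {P Q : Proc} (h : SCong P Q) : comps P = comps Q := by
  induction h with
  | refl P => rfl
  | symm _ ih => exact ih.symm
  | trans _ _ ih1 ih2 => exact ih1.trans ih2
  | parComm P Q => exact add_comm _ _
  | parAssoc P Q R => exact add_assoc _ _ _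
  | parNil P => exact add_zero _
  | parCong _ _ ih1 ih2 => simp only [comps, ih1, ih2]
  | inpCong a h ih => simp only [comps, cl_eq.2 h]
  | outCong a h ih => simp only [comps, cl_eq.2 h]

/-- Rebuild a process class from a component. -/
def ofComp : Cmp → PQ
  | cin a P => Quotient.map (Proc.inp a) (fun _ _ h => SCong.inpCong a h) P
  | cout a P => Quotient.map (Proc.out a) (fun _ _ h => SCong.outCong a h) P
  | cvar n => cl (.pvar n)

theorem cl_eq_sum (P : Proc) : cl P = ((comps P).map ofComp).sum := by
  induction P with
  | nil => rfl
  | pvar n => simp [comps, ofComp]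
  | par P Q ih1 ih2 => simp [comps, cl_par, ih1, ih2]
  | inp a P ih => simp only [comps, Multiset.map_singleton, Multiset.sum_singleton]; rfl
  | out a P ih => simp only [comps, Multiset.map_singleton, Multiset.sum_singleton]; rfl

theorem scong_iff {P Q : Proc} : SCong P Q ↔ comps P = comps Q :=
  ⟨comps_scong, fun h => cl_eq.1 (by rw [cl_eq_sum, cl_eq_sum, h])⟩

theorem cl_surj (q : PQ) : ∃ P, cl P = q := Quotient.exists_rep q

theorem comps_surj (m : Soup) : ∃ P, comps P = m := by
  induction m using Multiset.induction_on with
  | empty => exact ⟨.nil, rfl⟩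
  | cons c m ih =>
    obtain ⟨P, rfl⟩ := ih
    cases c with
    | cin a q =>
      obtain ⟨Q, rfl⟩ := cl_surj q
      exact ⟨.par (.inp a Q) P, by simp [comps]⟩
    | cout a q =>
      obtain ⟨Q, rfl⟩ := cl_surj q
      exact ⟨.par (.out a Q) P, by simp [comps]⟩
    | cvar n => exact ⟨.par (.pvar n) P, by simp [comps]⟩

theorem comps_subst_congr {B B' R R' : Proc} (h : cl B = cl B') (h' : cl R = cl R') :
    comps (B.subst 0 R) = comps (B'.subst 0 R') :=
  comps_scong ((scong_subst_left (cl_eq.1 h) _ _).trans (scong_subst_right (cl_eq.1 h') _ _))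

/-! #### Transitions of soups -/

def OutM (m : Soup) (a : Name) (R : Proc) (m' : Soup) : Prop := m = cout a (cl R) ::ₘ m'

def InM (m : Soup) (a : Name) (R : Proc) (m' : Soup) : Prop :=
  ∃ B rest, m = cin a (cl B) ::ₘ rest ∧ m' = comps (B.subst 0 R) + rest

def TauM (m m' : Soup) : Prop :=
  ∃ a R B rest, m = cout a (cl R) ::ₘ cin a (cl B) ::ₘ rest ∧ m' = comps (B.subst 0 R) + rest

def StepM (m : Soup) (l : Label) (m' : Soup) : Prop :=
  match l with
  | .tau => TauM m m'
  | .outl a R => OutM m a R m'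
  | .inl a R => InM m a R m'

theorem InM.add_right {m a R m'} (h : InM m a R m') (s : Soup) : InM (m + s) a R (m' + s) := by
  obtain ⟨B, rest, rfl, rfl⟩ := h
  exact ⟨B, rest + s, by simp, by rw [add_assoc]⟩

theorem OutM.add_right {m a R m'} (h : OutM m a R m') (s : Soup) : OutM (m + s) a R (m' + s) := by
  unfold OutM at *; subst h; simp

theorem TauM.add_right {m m'} (h : TauM m m') (s : Soup) : TauM (m + s) (m' + s) := by
  obtain ⟨a, R, B, rest, rfl, rfl⟩ := h
  exact ⟨a, R, B, rest + s, by simp, by rw [add_assoc]⟩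

theorem TauM.add_left {m m'} (h : TauM m m') (s : Soup) : TauM (s + m) (s + m') := by
  rw [add_comm s, add_comm s]; exact h.add_right s

theorem StepM.add_right {m l m'} (h : StepM m l m') (s : Soup) : StepM (m + s) l (m' + s) := by
  cases l
  · exact TauM.add_right h s
  · exact OutM.add_right h s
  · exact InM.add_right h s

theorem comm_M {m a R m' s s'} (h : OutM m a R m') (h2 : InM s a R s') :
    TauM (m + s) (m' + s') := by
  obtain ⟨B, rest, rfl, rfl⟩ := h2
  unfold OutM at h
  subst h
  refine ⟨a, R, B, m' + rest, ?_, ?_⟩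
  · rw [Multiset.cons_add, Multiset.add_cons]
  · abel

theorem step_sound {P l P'} (h : Step P l P') : StepM (comps P) l (comps P') := by
  induction h with
  | outS a P => simp [StepM, OutM, comps]
  | inpS a Q P => exact ⟨Q, 0, by simp [comps], by simp⟩
  | parL Q _ ih => exact ih.add_right _
  | parR P _ ih => simp only [comps]; rw [add_comm (comps P), add_comm (comps P)]; exact ih.add_right _
  | comm1 _ _ ih1 ih2 => exact comm_M ih1 ih2
  | comm2 _ _ ih1 ih2 =>
    have := comm_M ih2 ih1
    simp only [StepM, comps]
    rw [add_comm, add_comm] at this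
    rw [add_comm] at this ⊢
    convert this using 1 <;> exact add_comm _ _
  | struct h1 _ h2 ih => rw [comps_scong h1, ← comps_scong h2]; exact ih

theorem step_complete {P l P'} (h : StepM (comps P) l (comps P')) : Step P l P' := by
  cases l with
  | tau =>
    obtain ⟨a, R, B, rest, h1, h2⟩ := h
    obtain ⟨T, rfl⟩ := comps_surj rest
    refine Step.struct (P' := .par (.par (.out a R) (.inp a B)) T) (scong_iff.2 ?_)
      (.parL _ (.comm1 (.outS a R) (.inpS a B R))) (scong_iff.2 ?_)
    · rw [h1]; simp [comps]
    · rw [h2]; simp [comps]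
  | outl a R =>
    have h : comps P = cout a (cl R) ::ₘ comps P' := h
    refine Step.struct (P' := .par (.out a R) P') (scong_iff.2 ?_)
      (.parL _ (.outS a R)) (scong_iff.2 ?_)
    · rw [h]; simp [comps]
    · simp [comps]
  | inl a R =>
    obtain ⟨B, rest, h1, h2⟩ := h
    obtain ⟨T, rfl⟩ := comps_surj rest
    refine Step.struct (P' := .par (.inp a B) T) (scong_iff.2 ?_)
      (.parL _ (.inpS a B R)) (scong_iff.2 ?_)
    · rw [h1]; simp [comps]
    · rw [h2]; simp [comps]

/-- Weak internal transitions of soups. -/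
abbrev WTauM : Soup → Soup → Prop := Relation.ReflTransGen TauM

theorem wtau_sound {P P'} (h : WTau P P') : WTauM (comps P) (comps P') := by
  induction h with
  | refl => exact .refl
  | tail _ h ih => exact ih.tail (step_sound h)

theorem wtau_complete {P m} (h : WTauM (comps P) m) : ∃ P', WTau P P' ∧ comps P' = m := by
  induction h with
  | refl => exact ⟨P, .refl, rfl⟩
  | @tail b c _ h ih =>
    obtain ⟨P', h1, rfl⟩ := ih
    obtain ⟨P2, rfl⟩ := comps_surj c
    exact ⟨P2, h1.tail (step_complete (l := .tau) h), rfl⟩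

theorem WTauM.add_right {m m'} (h : WTauM m m') (s : Soup) : WTauM (m + s) (m' + s) := by
  induction h with
  | refl => exact .refl
  | tail _ h ih => exact ih.tail (h.add_right s)

theorem cons_split {x s t : Soup} {c : Cmp} (h : x + s = c ::ₘ t) :
    (∃ x', x = c ::ₘ x' ∧ t = x' + s) ∨ (∃ s', s = c ::ₘ s' ∧ t = x + s') := by
  have hc : c ∈ x + s := by rw [h]; simp
  rcases Multiset.mem_add.1 hc with hc | hc
  · obtain ⟨x', rfl⟩ := Multiset.exists_cons_of_mem hc
    left
    refine ⟨x', rfl, ?_⟩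
    rw [Multiset.cons_add] at h
    exact ((Multiset.cons_inj_right _).1 h).symm
  · obtain ⟨s', rfl⟩ := Multiset.exists_cons_of_mem hc
    right
    refine ⟨s', rfl, ?_⟩
    rw [Multiset.add_cons] at h
    exact ((Multiset.cons_inj_right _).1 h).symm

theorem in_split {x s q : Soup} {a R} (h : InM (x + s) a R q) :
    (∃ x', InM x a R x' ∧ q = x' + s) ∨ (∃ s', InM s a R s' ∧ q = x + s') := by
  obtain ⟨B, rest, h, rfl⟩ := h
  rcases cons_split h with ⟨x', rfl, rfl⟩ | ⟨s', rfl, rfl⟩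
  · exact .inl ⟨_, ⟨B, x', rfl, rfl⟩, by rw [add_assoc]⟩
  · exact .inr ⟨_, ⟨B, s', rfl, rfl⟩, by abel⟩

theorem tau_split {x s q : Soup} (h : TauM (x + s) q) :
    (∃ x', TauM x x' ∧ q = x' + s) ∨ (∃ s', TauM s s' ∧ q = x + s') ∨
    (∃ a R x' s', OutM x a R x' ∧ InM s a R s' ∧ q = x' + s') ∨
    (∃ a R x' s', InM x a R x' ∧ OutM s a R s' ∧ q = x' + s') := by
  obtain ⟨a, R, B, rest, h, rfl⟩ := h
  rcases cons_split h with ⟨x', rfl, h2⟩ | ⟨s', rfl, h2⟩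
  · rcases cons_split h2.symm with ⟨x2, rfl, rfl⟩ | ⟨s', rfl, rfl⟩
    · exact .inl ⟨_, ⟨a, R, B, x2, rfl, rfl⟩, by rw [add_assoc]⟩
    · exact .inr (.inr (.inl ⟨a, R, x', _, rfl, ⟨B, s', rfl, rfl⟩, by abel⟩))
  · rcases cons_split h2.symm with ⟨x2, rfl, rfl⟩ | ⟨s2, rfl, rfl⟩
    · exact .inr (.inr (.inr ⟨a, R, _, s', ⟨B, x2, rfl, rfl⟩, rfl, by abel⟩))
    · exact .inr (.inl ⟨_, ⟨a, R, B, s2, rfl, rfl⟩, by abel⟩)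

/-! #### Names -/

theorem fnames_scong {P Q : Proc} (h : SCong P Q) : P.fnames = Q.fnames := by
  induction h with
  | refl P => rfl
  | symm _ ih => exact ih.symm
  | trans _ _ ih1 ih2 => exact ih1.trans ih2
  | parComm P Q => exact Finset.union_comm _ _
  | parAssoc P Q R => exact Finset.union_assoc _ _ _
  | parNil P => exact Finset.union_empty _
  | parCong _ _ ih1 ih2 => simp only [fnames, ih1, ih2]
  | inpCong a h ih => simp only [fnames, ih]
  | outCong a h ih => simp only [fnames, ih]

theorem fnames_lift (P : Proc) : ∀ d k, (P.lift d k).fnames = P.fnames := by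
  induction P with
  | nil => intros; rfl
  | pvar n => intro d k; simp only [lift]; split_ifs <;> rfl
  | par P Q ih1 ih2 => intro d k; simp only [lift, fnames, ih1, ih2]
  | inp a P ih => intro d k; simp only [lift, fnames, ih]
  | out a P ih => intro d k; simp only [lift, fnames, ih]

theorem fnames_subst (P S : Proc) : ∀ k, (P.subst k S).fnames ⊆ P.fnames ∪ S.fnames := by
  induction P with
  | nil => intro k; simp [subst, fnames]
  | pvar n => intro k; simp only [subst]; split_ifs <;> simp [fnames, fnames_lift]
  | par P Q ih1 ih2 =>
    intro k x hx
    have h1 := @ih1 k x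
    have h2 := @ih2 k x
    simp only [subst, fnames, Finset.mem_union] at *
    tauto
  | inp a P ih =>
    intro k x hx
    have h1 := @ih (k + 1) x
    simp only [subst, fnames, Finset.mem_union, Finset.mem_insert] at *
    tauto
  | out a P ih =>
    intro k x hx
    have h1 := @ih k x
    simp only [subst, fnames, Finset.mem_union, Finset.mem_insert] at *
    tauto

/-- Soups of processes whose names avoid the hidden names. -/
def Ctx (s : Soup) : Prop := ∃ S, comps S = s ∧ ∀ a ∈ S.fnames, a ∉ HSetV

theorem Ctx.names {S : Proc} (h : Ctx (comps S)) : ∀ a ∈ S.fnames, a ∉ HSetV := by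
  obtain ⟨T, hT, h⟩ := h
  rwa [fnames_scong (scong_iff.2 hT)] at h

theorem Ctx.add {s s'} (h : Ctx s) (h' : Ctx s') : Ctx (s + s') := by
  obtain ⟨S, rfl, h⟩ := h
  obtain ⟨S', rfl, h'⟩ := h'
  refine ⟨.par S S', rfl, fun a ha => ?_⟩
  rcases Finset.mem_union.1 ha with ha | ha
  · exact h a ha
  · exact h' a ha

theorem Ctx.left {s s'} (h : Ctx (s + s')) : Ctx s := by
  obtain ⟨S, rfl⟩ := comps_surj s
  obtain ⟨S', rfl⟩ := comps_surj s'
  exact ⟨S, rfl, fun a ha => h.names (S := .par S S') a (Finset.mem_union_left _ ha)⟩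

theorem Ctx.right {s s'} (h : Ctx (s + s')) : Ctx s' := by rw [add_comm] at h; exact h.left

theorem Ctx.cin {a B} (h : Ctx ({cin a (cl B)} : Soup)) : a ∉ HSetV ∧ ∀ x ∈ B.fnames, x ∉ HSetV :=
  ⟨h.names (S := .inp a B) a (by simp [fnames]),
    fun x hx => h.names (S := .inp a B) x (by simp [fnames, hx])⟩

theorem Ctx.cout {a B} (h : Ctx ({cout a (cl B)} : Soup)) :
    a ∉ HSetV ∧ ∀ x ∈ B.fnames, x ∉ HSetV :=
  ⟨h.names (S := .out a B) a (by simp [fnames]),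
    fun x hx => h.names (S := .out a B) x (by simp [fnames, hx])⟩

theorem Ctx.subst {B R : Proc} (hB : ∀ x ∈ B.fnames, x ∉ HSetV) (hR : ∀ x ∈ R.fnames, x ∉ HSetV) :
    Ctx (comps (B.subst 0 R)) := by
  refine ⟨_, rfl, fun a ha => ?_⟩
  rcases Finset.mem_union.1 (fnames_subst B R 0 ha) with ha | ha
  · exact hB a ha
  · exact hR a ha

theorem Ctx.tau {s s'} (h : Ctx s) (ht : TauM s s') : Ctx s' := by
  obtain ⟨a, R, B, rest, rfl, rfl⟩ := ht
  rw [← Multiset.singleton_add, ← Multiset.singleton_add] at h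
  exact (Ctx.subst h.right.left.cin.2 h.left.cout.2).add h.right.right

theorem Ctx.out {s s' a R} (h : Ctx s) (ht : OutM s a R s') : a ∉ HSetV ∧ Ctx s' := by
  unfold OutM at ht
  subst ht
  rw [← Multiset.singleton_add] at h
  exact ⟨h.left.cout.1, h.right⟩

theorem Ctx.inM {s s' a R} (h : Ctx s) (ht : InM s a R s') : a ∉ HSetV := by
  obtain ⟨B, rest, rfl, rfl⟩ := ht
  rw [← Multiset.singleton_add] at h
  exact h.left.cin.1


/-! #### De Bruijn lemmas -/

theorem lift_zero (P : Proc) : ∀ k, P.lift 0 k = P := by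
  induction P with
  | nil => intros; rfl
  | pvar n => intro k; simp only [lift]; split_ifs <;> rfl
  | par P Q ih1 ih2 => intro k; simp only [lift, ih1, ih2]
  | inp a P ih => intro k; simp only [lift, ih]
  | out a P ih => intro k; simp only [lift, ih]

theorem lift_lift (P : Proc) (d e : ℕ) :
    ∀ k j, k ≤ j → j ≤ k + e → (P.lift e k).lift d j = P.lift (d + e) k := by
  induction P with
  | nil => intros; rfl
  | pvar n =>
    intro k j h1 h2
    by_cases h : n < k
    · have : n < j := by omega
      simp [lift, h, this]
    · have : ¬ n + e < j := by omega
      simp [lift, h, this]; omega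
  | par P Q ih1 ih2 => intro k j h1 h2; simp only [lift, ih1 k j h1 h2, ih2 k j h1 h2]
  | inp a P ih => intro k j h1 h2; simp only [lift, ih (k + 1) (j + 1) (by omega) (by omega)]
  | out a P ih => intro k j h1 h2; simp only [lift, ih k j h1 h2]

theorem lift_lift_comm (P : Proc) (d e : ℕ) :
    ∀ k j, j ≤ k → (P.lift e j).lift d (k + e) = (P.lift d k).lift e j := by
  induction P with
  | nil => intros; rfl
  | pvar n =>
    intro k j h1
    by_cases h : n < j
    · have h2 : n < k := by omega
      have h3 : n < k + e := by omega
      simp [lift, h, h2, h3]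
    · by_cases h2 : n < k
      · simp [lift, h, h2]
      · have h3 : ¬ n + d < j := by omega
        simp [lift, h, h2, h3]; omega
  | par P Q ih1 ih2 => intro k j h1; simp only [lift, ih1 k j h1, ih2 k j h1]
  | inp a P ih =>
    intro k j h1
    have := ih (k + 1) (j + 1) (by omega)
    rw [Nat.add_right_comm] at this
    simp only [lift, this]
  | out a P ih => intro k j h1; simp only [lift, ih k j h1]

theorem subst_lift (P S : Proc) (d : ℕ) :
    ∀ k j, k ≤ j → j ≤ k + d → (P.lift (d + 1) k).subst j S = P.lift d k := by
  induction P with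
  | nil => intros; rfl
  | pvar n =>
    intro k j h1 h2
    by_cases h : n < k
    · have h3 : ¬ n = j := by omega
      have h4 : ¬ j < n := by omega
      simp [lift, subst, h, h3, h4]
    · have h3 : ¬ n + (d + 1) = j := by omega
      have h4 : j < n + (d + 1) := by omega
      simp [lift, subst, h, h3, h4]
  | par P Q ih1 ih2 => intro k j h1 h2; simp only [lift, subst, ih1 k j h1 h2, ih2 k j h1 h2]
  | inp a P ih => intro k j h1 h2; simp only [lift, subst, ih (k + 1) (j + 1) (by omega) (by omega)]
  | out a P ih => intro k j h1 h2; simp only [lift, subst, ih k j h1 h2]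

theorem lift_subst_comm (P S : Proc) (d : ℕ) :
    ∀ k j, j ≤ k → (P.lift d j).subst (k + d) S = (P.subst k S).lift d j := by
  induction P with
  | nil => intros; rfl
  | pvar n =>
    intro k j h1
    by_cases h : n < j
    · have h3 : ¬ n = k + d := by omega
      have h4 : ¬ k + d < n := by omega
      have h5 : ¬ n = k := by omega
      have h6 : ¬ k < n := by omega
      simp [lift, subst, h, h3, h4, h5, h6]
    · by_cases h5 : n = k
      · subst h5
        simp [lift, subst, h]
        rw [lift_lift _ _ _ _ _ (by omega) (by omega), Nat.add_comm]
      · by_cases h6 : k < n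
        · have h7 : ¬ n - 1 < j := by omega
          simp [lift, subst, h, h5, h6, h7]; omega
        · simp [lift, subst, h, h5, h6]
  | par P Q ih1 ih2 => intro k j h1; simp only [lift, subst, ih1 k j h1, ih2 k j h1]
  | inp a P ih =>
    intro k j h1
    have := ih (k + 1) (j + 1) (by omega)
    rw [Nat.add_right_comm] at this
    simp only [lift, subst, this]
  | out a P ih => intro k j h1; simp only [lift, subst, ih k j h1]

theorem subst_lift1 (P S : Proc) : (P.lift 1 0).subst 0 S = P := by
  have := subst_lift P S 0 0 0 le_rfl le_rfl
  rwa [lift_zero] at this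

/-- Iterated substitution used for a beta step. -/
theorem subst_beta (P V R : Proc) : ((P.lift 1 0).subst 1 V).subst 0 R = P.subst 0 V := by
  have := lift_subst_comm P V 1 0 0 le_rfl
  rw [Nat.zero_add] at this
  rw [this, subst_lift1]

theorem lift_Restart (d k : ℕ) : RestartV.lift d k = RestartV := by
  simp [RestartV, FunP, trMtV, lift]

theorem subst_Restart (k : ℕ) (S : Proc) : RestartV.subst k S = RestartV := by
  have := subst_lift RestartV S 0 k k le_rfl le_rfl
  rwa [lift_Restart, lift_Restart] at this

theorem lift_FV (n d : ℕ) : ∀ k, (trFVV n).lift d k = trFVV n := by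
  induction n with
  | zero =>
    intro k
    have h1 : ∀ m, 3 < m + 4 := by omega
    have h2 : ∀ m, 2 < m + 3 := by omega
    simp [trFVV, ChoiceV, choicePlus, RestartV, FunP, trMtV, lift, Nat.add_assoc]
  | succ n ih => intro k; simp only [trFVV, lift, ih]

theorem subst_FV (n k : ℕ) (S : Proc) : (trFVV n).subst k S = trFVV n := by
  have := subst_lift (trFVV n) S 0 k k le_rfl le_rfl
  rwa [lift_FV, lift_FV] at this

theorem trCV_val {v : CTm} (h : CIsVal v) : trCV v = .inp cN (.par (.pvar 0)
    (.par (.out val0N ((trVV v).lift 1 0)) (.out bN RestartV))) := by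
  cases v with
  | app _ _ => exact h.elim
  | _ => simp [trCV, trVV, lift]

theorem val_lift {v : CTm} (h : CIsVal v) (d k : ℕ) : CIsVal (v.liftC d k) := by
  cases v with
  | app _ _ => exact h.elim
  | bvar n => simp only [CTm.liftC]; split_ifs <;> trivial
  | _ => trivial

theorem trCV_lift (t : CTm) (d : ℕ) : ∀ k, trCV (t.liftC d k) = (trCV t).lift d k := by
  induction t with
  | fvar f => intro k; simp [CTm.liftC, trCV, lift, lift_FV, lift_Restart]
  | bvar n =>
    intro k
    simp only [CTm.liftC]
    split_ifs with h <;> simp [trCV, lift, lift_Restart, h, Nat.add_right_comm]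
  | lam t ih =>
    intro k
    have h1 := lift_lift_comm (trCV t) d 1 (k + 1) 0 (by omega)
    have h2 := lift_lift_comm ((trCV t).lift 1 0) d 1 (k + 2) 2 (by omega)
    simp [CTm.liftC, trCV, lift, lift_Restart, ih]
    rw [h2, h1]
  | app t s ih1 ih2 =>
    intro k
    have h1 := lift_lift_comm (trCV t) d 1 k 0 (by omega)
    have h2 := lift_lift_comm (trCV s) d 1 k 0 (by omega)
    have h3 := lift_lift_comm ((trCV s).lift 1 0) d 2 (k + 1) 0 (by omega)
    simp [CTm.liftC, trCV, lift, ArgV, FunP, ih1, ih2]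
    rw [h3, h1, h2]
    simp

theorem trVV_lift {v : CTm} (hv : CIsVal v) (d k : ℕ) :
    trVV (v.liftC d k) = (trVV v).lift d k := by
  cases v with
  | fvar f => simp [CTm.liftC, trVV, lift_FV]
  | bvar n => simp only [CTm.liftC, trVV, lift]; split_ifs <;> rfl
  | lam t =>
    have h1 := lift_lift_comm (trCV t) d 1 (k + 1) 0 (by omega)
    simp [CTm.liftC, trVV, lift, trCV_lift]
    rw [h1]
  | app _ _ => exact hv.elim

theorem trCV_subst (t : CTm) {v : CTm} (hv : CIsVal v) :
    ∀ k, trCV (t.substC k v) = (trCV t).subst k (trVV v) := by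
  induction t with
  | fvar f => intro k; simp [CTm.substC, trCV, subst, lift_FV, subst_FV, subst_Restart]
  | bvar n =>
    intro k
    simp only [CTm.substC]
    split_ifs with h h2
    · subst h
      rw [trCV_val (val_lift hv _ _), trVV_lift hv]
      simp [trCV, subst, subst_Restart, lift_lift, Nat.add_comm]
    · simp [trCV, subst, subst_Restart, h, h2]; omega
    · simp [trCV, subst, subst_Restart, h, h2]
  | lam t ih =>
    intro k
    have h1 := lift_subst_comm (trCV t) (trVV v) 1 (k + 1) 0 (by omega)
    have h2 := lift_subst_comm ((trCV t).lift 1 0) (trVV v) 1 (k + 2) 2 (by omega)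
    simp [CTm.substC, trCV, lift, subst, subst_Restart, ih]
    rw [h2, h1]
  | app t s ih1 ih2 =>
    intro k
    have h1 := lift_subst_comm (trCV t) (trVV v) 1 k 0 (by omega)
    have h2 := lift_subst_comm (trCV s) (trVV v) 1 k 0 (by omega)
    have h3 := lift_subst_comm ((trCV s).lift 1 0) (trVV v) 2 (k + 1) 0 (by omega)
    simp [CTm.substC, trCV, lift, subst, ArgV, FunP, ih1, ih2]
    rw [h3, h1, h2]
    simp

theorem Choice_subst (A B C S : Proc) (k : ℕ) :
    (ChoiceV A B C).subst k S = ChoiceV (A.subst k S) (B.subst k S) (C.subst k S) := by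
  have h := fun X => lift_subst_comm X S 1 k 0 (by omega)
  have h2 := lift_subst_comm C S 2 k 0 (by omega)
  simp [ChoiceV, choicePlus, subst, FunP, trMtV, subst_Restart, h, h2]


/-! #### Deterministic soups -/

/-- All components are outputs on hidden names satisfying `p`. -/
def Outs (p : Name → Prop) (O : Soup) : Prop := ∀ c ∈ O, ∃ b r, c = cout b r ∧ b ∈ HSetV ∧ p b

theorem Outs.zero {p} : Outs p 0 := by intro c hc; simp at hc

theorem Outs.add {p O O'} (h : Outs p O) (h' : Outs p O') : Outs p (O + O') := by
  intro c hc
  rcases Multiset.mem_add.1 hc with hc | hc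
  · exact h c hc
  · exact h' c hc

theorem Outs.single {p : Name → Prop} {b r} (hb : b ∈ HSetV) (hp : p b) :
    Outs p ({cout b r} : Soup) := by
  intro c hc
  rw [Multiset.mem_singleton] at hc
  exact ⟨b, r, hc, hb, hp⟩

/-- Only one internal transition is possible, and no visible one. -/
structure DetT (p q : Soup) : Prop where
  tau : TauM p q
  uniq : ∀ q', TauM p q' → q' = q
  noin : ∀ a R q', InM p a R q' → a ∈ HSetV
  noout : ∀ a R q', OutM p a R q' → a ∈ HSetV

theorem in_inv {a B O a' R x'} {p} (hO : Outs p O)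
    (h : InM ({cin a (cl B)} + O) a' R x') : a' = a ∧ x' = comps (B.subst 0 R) + O := by
  obtain ⟨B', rest, h, rfl⟩ := h
  rcases cons_split h with ⟨x', h1, h2⟩ | ⟨s', h1, h2⟩
  · rw [← Multiset.cons_zero, Multiset.cons_eq_cons] at h1
    rcases h1 with ⟨h1, h3⟩ | ⟨_, _, h1, _⟩
    · injection h1 with h1 h4
      subst h1 h2 h3
      exact ⟨rfl, by rw [comps_subst_congr h4 rfl]; simp⟩
    · simp at h1
  · obtain ⟨b, r, h, _⟩ := hO (cin a' (cl B')) (by rw [h1]; simp)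
    simp at h

theorem out_inv {a B O a' R x'} {p} (hO : Outs p O)
    (h : OutM ({cin a (cl B)} + O) a' R x') :
    a' ∈ HSetV ∧ p a' ∧ ∃ O', OutM O a' R O' ∧ x' = {cin a (cl B)} + O' := by
  rcases cons_split h with ⟨x', h1, h2⟩ | ⟨s', h1, h2⟩
  · rw [← Multiset.cons_zero, Multiset.cons_eq_cons] at h1
    rcases h1 with ⟨h1, h3⟩ | ⟨_, _, h1, _⟩ <;> simp at h1
  · obtain ⟨b, r, h, h3, h4⟩ := hO (cout a' (cl R)) (by rw [h1]; simp)
    injection h with h5 h6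
    subst h5
    exact ⟨h3, h4, s', h1, h2⟩

theorem tau_inv {a B O x'} {p} (hO : Outs p O)
    (h : TauM ({cin a (cl B)} + O) x') :
    ∃ R O', OutM O a R O' ∧ x' = comps (B.subst 0 R) + O' := by
  obtain ⟨a', R, B', rest, h, rfl⟩ := h
  obtain ⟨h1, h2, O', h3, h4⟩ := out_inv hO h
  have hO' : Outs p O' := fun c hc => hO c (by rw [h3]; simp [hc])
  obtain ⟨rfl, h6⟩ := in_inv hO' (R := R) ⟨B', rest, h4.symm, rfl⟩
  exact ⟨R, O', h3, h6⟩

theorem detT_intro {a B R O} (ha : a ∈ HSetV) (hO : Outs (fun b => b ≠ a) O) :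
    DetT ({cin a (cl B)} + ({cout a (cl R)} + O)) (comps (B.subst 0 R) + O) := by
  have hO2 : Outs (fun _ => True) ({cout a (cl R)} + O) :=
    .add (.single ha trivial) fun c hc => by
      obtain ⟨b, r, h⟩ := hO c hc
      exact ⟨b, r, h.1, h.2.1, trivial⟩
  refine ⟨⟨a, R, B, O, ?_, rfl⟩, fun q' h => ?_, fun a' R' q' h => ?_, fun a' R' q' h => ?_⟩
  · simp only [Multiset.singleton_add]; rw [Multiset.cons_swap]
  · obtain ⟨R', O', h1, rfl⟩ := tau_inv hO2 h
    rcases cons_split h1 with ⟨x', h3, h2⟩ | ⟨s', h3, h2⟩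
    · rw [← Multiset.cons_zero, Multiset.cons_eq_cons] at h3
      rcases h3 with ⟨h3, h4⟩ | ⟨_, _, h1, _⟩
      · injection h3 with h5 h6
        subst h2 h4
        rw [comps_subst_congr rfl h6]; simp
      · simp at h1
    · obtain ⟨b, r, h, h4, h5⟩ := hO (cout a (cl R')) (by rw [h3]; simp)
      injection h with h7
      exact absurd h7.symm h5
  · rw [(in_inv hO2 h).1]; exact ha
  · exact (out_inv hO2 h).1

/-! #### The coarse machine -/

/-- States of the coarse machine. -/
inductive YS
  | ev : CTm → CStack → ℕ → YS
  | lamS : CTm → ℕ → YS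
  | headS : ℕ → CStack → CTm → ℕ → YS
  | dead : YS
  | zst : CStack → CTm → ℕ → YS
  | aval : CTm → ℕ → YS
  | actx : CStack → ℕ → YS

open YS

/-- Coarse state reached from a continuation-mode configuration. -/
def contS : CStack → CTm → ℕ → YS
  | [], v, n => lamS v n
  | .argI t :: π, v, n => ev t (.funI v :: π) n
  | .funI (.lam t) :: π, v, n => ev (t.substC 0 v) π n
  | .funI (.fvar f) :: π, v, n => headS f π v n
  | .funI (.bvar _) :: _, _, _ => dead
  | .funI (.app _ _) :: _, _, _ => dead

inductive YTau : YS → YS → Prop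
  | app {t s π n} : YTau (ev (.app t s) π n) (ev t (.argI s :: π) n)
  | switch {v π n} : CIsVal v → YTau (ev v π n) (contS π v n)
  | chL {π v n} : YTau (zst π v n) (aval v n)
  | chR {π v n} : YTau (zst π v n) (actx π n)

inductive YFlag : YS → Name → YS → Prop
  | lam {v n} : YFlag (lamS v n) lamF (contS [.funI v] (.fvar n) (n + 1))
  | suc {f π v n} : YFlag (headS (f + 1) π v n) sucN (headS f π v n)
  | z {π v n} : YFlag (headS 0 π v n) zN (zst π v n)
  | val {v n} : YFlag (aval v n) valF (contS [.funI v] (.fvar n) (n + 1))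
  | ctx {π n} : YFlag (actx π n) ctxF (contS π (.fvar n) (n + 1))

/-- The rest of a continuation-mode process. -/
def restO (V N r : Proc) : Soup := {cout val0N (cl V)} + {cout kN (cl N)} + {cout bN (cl r)}

/-- Branch `val` of the choice. -/
def brVal (V N : Proc) : Proc :=
  .par (FunP (V.lift 1 0) trMtV)
      (.par (.out val0N (N.lift 1 0))
        (.par (.out kN (.inp sucN (N.lift 2 0))) (.out bN RestartV)))

/-- Branch `ctx` of the choice. -/
def brCtx (Q N : Proc) : Proc :=
  .par (Q.lift 1 0)
      (.par (.out val0N (N.lift 1 0))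
        (.par (.out kN (.inp sucN (N.lift 2 0))) (.out bN RestartV)))

theorem Choice_eq (V Q N : Proc) :
    ChoiceV V Q N = choicePlus (.inp valF (brVal V N)) (.inp ctxF (brCtx Q N)) := rfl

/-- Soups encoding a coarse state. -/
def Enc (x : Soup) : YS → Prop
  | ev t π n => x = comps (trEvV t π n)
  | lamS v n => x = {cin lamF (cl (.inp val0N (.inp kN (.par (FunP (.pvar 1) trMtV)
    (.par (.out val0N (.pvar 0))
      (.par (.out kN (.inp sucN (.pvar 1))) (.out bN .nil)))))))} +
      ({cout val0N (cl (trVV v))} + {cout kN (cl (trFVV n))})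
  | headS f π v n => ∃ r,
      x = comps (trFVV f) + ({cout cN (cl (trStV π))} + restO (trVV v) (trFVV n) r)
  | dead => ∀ c ∈ x, (∃ b r, c = cout b r ∧ b ∈ HSetV) ∨ ∃ m, c = cvar m
  | zst π v n => x = comps (ChoiceV (trVV v) (trStV π) (trFVV n))
  | aval v n => x = {cin valF (cl (brVal (trVV v) (trFVV n)))}
  | actx π n => x = {cin ctxF (cl (brCtx (trStV π) (trFVV n)))}

abbrev DetTs : Soup → Soup → Prop := Relation.ReflTransGen DetT

def Rep (x : Soup) (y : YS) : Prop := ∃ z, DetTs x z ∧ Enc z y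

theorem Rep.head {x x' y} (h : DetT x x') (h' : Rep x' y) : Rep x y := by
  obtain ⟨z, h1, h2⟩ := h'
  exact ⟨z, .head h h1, h2⟩

theorem Rep.of_enc {x y} (h : Enc x y) : Rep x y := ⟨x, .refl, h⟩

/-- Rewriting form of the introduction rule for deterministic steps. -/
theorem Rep.step {x y a B R O} (ha : a ∈ HSetV) (hx : x = {cin a (cl B)} + ({cout a (cl R)} + O))
    (hO : Outs (fun b => b ≠ a) O) (h : Rep (comps (B.subst 0 R) + O) y) : Rep x y := by
  subst hx
  exact .head (detT_intro ha hO) h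

theorem hc : cN ∈ HSetV := by simp [HSetV]
theorem hval0 : val0N ∈ HSetV := by simp [HSetV]
theorem hb : bN ∈ HSetV := by simp [HSetV]
theorem hk : kN ∈ HSetV := by simp [HSetV]
theorem hch : chN ∈ HSetV := by simp [HSetV]

theorem rep_cont (π : CStack) (v : CTm) (hv : CIsVal v) (n : ℕ) (r : Proc)
    (hr : π = [] → r = RestartV) :
    Rep (comps (trStV π) + restO (trVV v) (trFVV n) r) (contS π v n) := by
  match π with
  | [] =>
    obtain rfl := hr rfl
    refine Rep.step (B := .pvar 0) (R := RestartV)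
      (O := {cout val0N (cl (trVV v))} + {cout kN (cl (trFVV n))}) hb ?_ ?_ (.of_enc ?_)
    · simp only [trStV, trMtV, comps, restO]; abel
    · exact .add (.single hval0 (by decide)) (.single hk (by decide))
    · simp only [subst, contS, Enc, if_true, lift_zero]; rfl
  | .argI t :: π =>
    refine Rep.step (a := val0N) (R := trVV v)
      (O := {cout kN (cl (trFVV n))} + {cout bN (cl r)}) hval0
      (by simp only [trStV, ArgV, comps, restO]; abel) ?_ ?_
    · exact .add (.single hk (by decide)) (.single hb (by decide))
    simp only [subst]
    refine Rep.step (a := bN) (R := r)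
      (O := {cout kN (cl (trFVV n))}) hb
      (by simp only [comps]; abel) ?_ ?_
    · exact (.single hk (by decide))
    · refine .of_enc ?_
      have h1 := fun P S => subst_lift P S 1 0 1 (by omega) (by omega)
      simp [subst, contS, Enc, h1, subst_lift1, FunP, trEvV, trStV, comps, add_assoc]
  | .funI (.lam t) :: π =>
    refine Rep.step (a := val0N) (R := trVV v)
      (O := {cout cN (cl (trStV π))} + ({cout kN (cl (trFVV n))} + {cout bN (cl r)})) hval0
      (by simp only [trStV, trVV, FunP, comps, restO]; abel) ?_ ?_
    · exact .add (.single hc (by decide)) (.add (.single hk (by decide)) (.single hb (by decide)))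
    simp only [subst]
    refine Rep.step (a := bN) (R := r)
      (O := {cout cN (cl (trStV π))} + {cout kN (cl (trFVV n))}) hb
      (by simp only [comps]; abel) ?_ ?_
    · exact .add (.single hc (by decide)) (.single hk (by decide))
    · refine .of_enc ?_
      simp only [contS, Enc]
      rw [trEvV, trCV_subst _ hv]
      simp only [Nat.zero_add, subst_beta, comps]
  | .funI (.fvar f) :: π =>
    refine .of_enc ⟨r, ?_⟩
    simp only [trStV, trVV, FunP, comps, restO]; abel
  | .funI (.bvar m) :: π =>
    refine .of_enc ?_
    intro c hc
    simp [trStV, trVV, FunP, comps, restO] at hc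
    rcases hc with rfl | rfl | rfl | rfl | rfl <;> simp [HSetV]
  | .funI (.app _ _) :: π =>
    refine .of_enc ?_
    intro c hc
    simp [trStV, trVV, FunP, comps, restO] at hc
    rcases hc with rfl | rfl | rfl | rfl <;> simp [HSetV]

/-- Local correspondence between a soup and a coarse state. -/
structure Loc (x : Soup) (y : YS) : Prop where
  tau : ∀ x', TauM x x' → ∃ y', YTau y y' ∧ Rep x' y'
  inp : ∀ a R x', a ∉ HSetV → InM x a R x' → (∃ y', YFlag y a y' ∧ Rep x' y') ∧ ∀ R', InM x a R' x'
  out : ∀ a R x', OutM x a R x' → a ∈ HSetV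
  ytau : ∀ y', YTau y y' → ∃ x', TauM x x' ∧ Rep x' y'
  yflag : ∀ a y', YFlag y a y' → a ∉ HSetV ∧ ∃ x', (∀ R, InM x a R x') ∧ Rep x' y'

theorem loc_det {x x' y y'} (h : DetT x x') (hr : Rep x' y') (hy : YTau y y')
    (hu : ∀ w, YTau y w → w = y') (hf : ∀ a w, ¬ YFlag y a w) : Loc x y where
  tau := fun z hz => by rw [h.uniq z hz]; exact ⟨y', hy, hr⟩
  inp := fun a R z ha hz => absurd (h.noin _ _ _ hz) ha
  out := h.noout
  ytau := fun w hw => by rw [hu w hw]; exact ⟨x', h.tau, hr⟩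
  yflag := fun a w hw => absurd hw (hf a w)

theorem loc_flag {x y a B O X y'} (hx : x = {cin a (cl B)} + O)
    (hO : Outs (fun _ => True) O) (ha : a ∉ HSetV)
    (hX : ∀ R, comps (B.subst 0 R) = X) (hr : Rep (X + O) y') (hy : YFlag y a y')
    (hu : ∀ b w, YFlag y b w → b = a ∧ w = y') (ht : ∀ w, ¬ YTau y w) : Loc x y where
  tau := fun z hz => by
    subst hx
    obtain ⟨R, O', h, -⟩ := tau_inv hO hz
    obtain ⟨b, r, h1, h2, -⟩ := hO (cout a (cl R)) (by rw [h]; simp)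
    injection h1 with h1
    subst h1
    exact absurd h2 ha
  inp := fun b R z hb hz => by
    subst hx
    obtain ⟨rfl, rfl⟩ := in_inv hO hz
    rw [hX]
    exact ⟨⟨y', hy, hr⟩, fun R' => ⟨B, O, by simp, by rw [hX]⟩⟩
  out := fun b R z hz => by subst hx; exact (out_inv hO hz).1
  ytau := fun w hw => absurd hw (ht w)
  yflag := fun b w hw => by
    obtain ⟨rfl, rfl⟩ := hu b w hw
    exact ⟨ha, _, fun R => ⟨B, O, by rw [hx]; simp, by rw [hX]⟩, hr⟩


theorem nval_flag : lamF ∉ HSetV ∧ sucN ∉ HSetV ∧ zN ∉ HSetV ∧ valF ∉ HSetV ∧ ctxF ∉ HSetV := by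
  simp [HSetV, lamF, sucN, zN, valF, ctxF, cN, val0N, bN, kN, chN]

theorem outs_rest {p : Name → Prop} {V N r : Proc} (h1 : p val0N) (h2 : p kN) (h3 : p bN) :
    Outs p (restO V N r) :=
  .add (.add (.single hval0 h1) (.single hk h2)) (.single hb h3)

theorem FV_succ (n : ℕ) : Proc.inp sucN (trFVV n) = trFVV (n + 1) := rfl

theorem trMt_subst (k : ℕ) (S : Proc) : trMtV.subst k S = trMtV := by simp [trMtV, subst]

theorem rep_brVal (v : CTm) (n : ℕ) (R : Proc) :
    comps ((brVal (trVV v) (trFVV n)).subst 0 R) =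
      comps (trStV [.funI v]) + restO (trVV (.fvar n)) (trFVV (n + 1)) RestartV := by
  simp only [brVal, subst, FunP, subst_lift1, lift_FV, subst_FV, trMt_subst, subst_Restart, FV_succ,
    comps, trStV, restO]
  simp only [trVV]
  abel

theorem rep_brCtx (π : CStack) (n : ℕ) (R : Proc) :
    comps ((brCtx (trStV π) (trFVV n)).subst 0 R) =
      comps (trStV π) + restO (trVV (.fvar n)) (trFVV (n + 1)) RestartV := by
  simp only [brCtx, subst, subst_lift1, lift_FV, subst_FV, subst_Restart, FV_succ,
    comps, restO]
  simp only [trVV]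
  abel

theorem rep_ch (A B : Proc) (y : YS) (h : Rep (comps A) y) :
    Rep (comps ((Proc.inp chN (.pvar 1)).subst 0 A) + {cout chN (cl B)}) y := by
  refine Rep.step (a := chN) (R := B) (O := 0) hch
    (by simp only [subst, comps]; rw [add_zero]) .zero ?_
  simpa [subst_lift1] using h

theorem loc_enc {x y} (h : Enc x y) : Loc x y := by
  cases y with
  | ev t π n =>
    obtain rfl : x = _ := h
    by_cases ht : CIsVal t
    · have hx : comps (trEvV t π n) = {cin cN (cl (.par (.pvar 0)
          (.par (.out val0N ((trVV t).lift 1 0)) (.out bN RestartV))))} +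
          ({cout cN (cl (trStV π))} + {cout kN (cl (trFVV n))}) := by
        rw [trEvV, trCV_val ht]; rfl
      rw [hx]
      refine loc_det (detT_intro hc (.single hk (by decide))) ?_ (YTau.switch ht) ?_ ?_
      · have := rep_cont π t ht n RestartV (fun _ => rfl)
        simp only [subst, comps, subst_lift1, subst_Restart, if_true, lift_zero]
        convert this using 1
        simp only [restO]; abel
      · intro w hw
        cases hw with
        | app => exact ht.elim
        | switch => rfl
      · intro a w hw; cases hw
    · cases t with
      | app t s =>
        simp only [trEvV, comps, trCV]
        refine loc_det (detT_intro hc (.single hk (by decide))) ?_ YTau.app ?_ ?_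
        · refine .of_enc ?_
          have h1 := subst_lift (trCV s) (trStV π) 2 0 2 (by omega) (by omega)
          have h2 := lift_lift (trCV s) 2 1 0 0 (by omega) (by omega)
          simp [Enc, trEvV, comps, subst, subst_lift1, ArgV, FunP, trStV, h2, h1, lift, add_assoc]
        · intro w hw
          cases hw with
          | app => rfl
          | switch h => exact h.elim
        · intro a w hw; cases hw
      | _ => exact absurd trivial ht
  | lamS v n =>
    refine loc_flag h (.add (.single hval0 trivial) (.single hk trivial)) nval_flag.1
      (X := comps (.inp val0N (.inp kN (.par (FunP (.pvar 1) trMtV)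
        (.par (.out val0N (.pvar 0))
        (.par (.out kN (.inp sucN (.pvar 1))) (.out bN .nil)))))))
      (fun R => ?_) ?_ YFlag.lam ?_ ?_
    · simp [subst, FunP, trMtV]
    · refine Rep.step (a := val0N) (R := trVV v) (O := {cout kN (cl (trFVV n))}) hval0
        (by simp only [comps]; abel) (.single hk (by decide)) ?_
      simp only [subst]
      refine Rep.step (a := kN) (R := trFVV n) (O := 0) hk
        (by simp only [comps]; abel) .zero ?_
      have := rep_cont [.funI v] (.fvar n) trivial (n + 1) .nil (by simp)
      convert this using 1
      simp [subst, FunP, trMtV, subst_lift1, lift_FV, subst_FV, comps, trStV, restO, trVV, lift_zero,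
        FV_succ, add_assoc]
      exact Multiset.cons_swap _ _ _
    · intro b w hw; cases hw; exact ⟨rfl, rfl⟩
    · intro w hw; cases hw
  | headS f π v n =>
    obtain ⟨r, h⟩ := h
    have hO : ∀ p : Name → Prop, p cN → p val0N → p kN → p bN →
      Outs p ({cout cN (cl (trStV π))} + restO (trVV v) (trFVV n) r) :=
      fun p h1 h2 h3 h4 => .add (.single hc h1) (outs_rest h2 h3 h4)
    cases f with
    | succ f =>
      refine loc_flag h (hO _ trivial trivial trivial trivial) nval_flag.2.1
        (X := comps (trFVV f)) (fun R => ?_) ?_ YFlag.suc ?_ ?_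
      · rw [subst_FV]
      · exact .of_enc ⟨r, rfl⟩
      · intro b w hw; cases hw; exact ⟨rfl, rfl⟩
      · intro w hw; cases hw
    | zero =>
      refine loc_flag h (hO _ trivial trivial trivial trivial) nval_flag.2.2.1
        (X := comps (.inp val0N (.inp cN (.inp kN (.inp bN
          (ChoiceV (.pvar 3) (.pvar 2) (.pvar 1))))))) (fun R => ?_) ?_ YFlag.z ?_ ?_
      · simp [subst, Choice_subst]
      · refine Rep.step (a := val0N) (R := trVV v) (O := {cout cN (cl (trStV π))} +
          ({cout kN (cl (trFVV n))} + {cout bN (cl r)})) hval0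
          (by simp only [comps, restO]; abel)
          (.add (.single hc (by decide)) (.add (.single hk (by decide)) (.single hb (by decide)))) ?_
        simp only [subst]
        refine Rep.step (a := cN) (R := trStV π) (O :=
          ({cout kN (cl (trFVV n))} + {cout bN (cl r)})) hc
          (by simp only [comps]; rfl)
          (.add (.single hk (by decide)) (.single hb (by decide))) ?_
        simp only [subst]
        refine Rep.step (a := kN) (R := trFVV n) (O := {cout bN (cl r)}) hk
          (by simp only [comps]; rfl) (.single hb (by decide)) ?_
        simp only [subst]
        refine Rep.step (a := bN) (R := r) (O := 0) hb
          (by simp only [comps]; abel) .zero ?_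
        refine .of_enc ?_
        have h1 := fun P S => subst_lift P S 2 0 2 (by omega) (by omega)
        have h2 := fun P S => subst_lift P S 1 0 1 (by omega) (by omega)
        simp [Enc, Choice_subst, subst, h1, h2, subst_lift1, lift_FV, subst_FV]
      · intro b w hw; cases hw; exact ⟨rfl, rfl⟩
      · intro w hw; cases hw
  | dead =>
    refine ⟨?_, ?_, ?_, ?_, ?_⟩
    · rintro x' ⟨a, R, B, rest, rfl, -⟩
      have := h (cin a (cl B)) (by simp)
      simp at this
    · rintro a R x' - ⟨B, rest, rfl, -⟩
      have := h (cin a (cl B)) (by simp)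
      simp at this
    · intro a R x' ho
      have := h (cout a (cl R)) (by rw [ho]; simp)
      simpa using this
    · intro w hw; cases hw
    · intro a w hw; cases hw
  | zst π v n =>
    obtain rfl : x = _ := h
    rw [Choice_eq]
    have hx : ∀ A B, comps (choicePlus A B) = {cin chN (cl (.inp chN (.pvar 1)))} +
        ({cout chN (cl A)} + {cout chN (cl B)}) := by
      intro A B; simp only [choicePlus, comps]; abel
    have hO : ∀ A B, Outs (fun _ => True) ({cout chN A} + {cout chN B}) :=
      fun A B => .add (.single hch trivial) (.single hch trivial)
    have hA : Rep (comps (.inp valF (brVal (trVV v) (trFVV n)))) (aval v n) := .of_enc rfl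
    have hB : Rep (comps (.inp ctxF (brCtx (trStV π) (trFVV n)))) (actx π n) := .of_enc rfl
    rw [hx]
    generalize Proc.inp valF (brVal (trVV v) (trFVV n)) = A at *
    generalize Proc.inp ctxF (brCtx (trStV π) (trFVV n)) = B at *
    refine ⟨?_, ?_, ?_, ?_, ?_⟩
    · intro x' hx'
      obtain ⟨R, O', h1, rfl⟩ := tau_inv (hO _ _) hx'
      rcases cons_split h1 with ⟨u, h3, h2⟩ | ⟨u, h3, h2⟩
      · rw [← Multiset.cons_zero, Multiset.cons_eq_cons] at h3
        rcases h3 with ⟨h3, h4⟩ | ⟨_, _, h1, _⟩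
        · injection h3 with h5 h6
          subst h2 h4
          refine ⟨_, YTau.chL, ?_⟩
          rw [comps_subst_congr rfl h6.symm]
          simpa using rep_ch A B _ hA
        · simp at h1
      · rw [← Multiset.cons_zero, Multiset.cons_eq_cons] at h3
        rcases h3 with ⟨h3, h4⟩ | ⟨_, _, h1, _⟩
        · injection h3 with h5 h6
          subst h2 h4
          refine ⟨_, YTau.chR, ?_⟩
          rw [comps_subst_congr rfl h6.symm]
          simpa using rep_ch B A _ hB
        · simp at h1
    · intro a R x' ha hi
      exact absurd ((in_inv (hO _ _) hi).1 ▸ hch) ha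
    · intro a R x' ho
      exact (out_inv (hO _ _) ho).1
    · intro w hw
      cases hw with
      | chL =>
        refine ⟨_, ⟨chN, A, .inp chN (.pvar 1), {cout chN (cl B)}, ?_, rfl⟩, rep_ch A B _ hA⟩
        simp only [← Multiset.singleton_add]; abel
      | chR =>
        refine ⟨_, ⟨chN, B, .inp chN (.pvar 1), {cout chN (cl A)}, ?_, rfl⟩, rep_ch B A _ hB⟩
        simp only [← Multiset.singleton_add]; abel
    · intro a w hw; cases hw
  | aval v n =>
    obtain rfl : x = _ := h
    refine loc_flag (O := 0) (by rw [add_zero]) .zero nval_flag.2.2.2.1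
      (rep_brVal v n) ?_ YFlag.val ?_ ?_
    · rw [add_zero]
      exact rep_cont [.funI v] (.fvar n) trivial (n + 1) RestartV (by simp)
    · intro b w hw; cases hw; exact ⟨rfl, rfl⟩
    · intro w hw; cases hw
  | actx π n =>
    obtain rfl : x = _ := h
    refine loc_flag (O := 0) (by rw [add_zero]) .zero nval_flag.2.2.2.2
      (rep_brCtx π n) ?_ YFlag.ctx ?_ ?_
    · rw [add_zero]
      exact rep_cont π (.fvar n) trivial (n + 1) RestartV (fun _ => rfl)
    · intro b w hw; cases hw; exact ⟨rfl, rfl⟩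
    · intro w hw; cases hw

/-! #### Correspondence for `Rep` -/

abbrev YTaus : YS → YS → Prop := Relation.ReflTransGen YTau

theorem DetTs.wtau {x z} (h : DetTs x z) : WTauM x z := by
  induction h with
  | refl => exact .refl
  | tail _ h ih => exact ih.tail h.tau

theorem Rep.cases {x y} (h : Rep x y) : Enc x y ∨ ∃ x', DetT x x' ∧ Rep x' y := by
  obtain ⟨z, h1, h2⟩ := h
  rcases Relation.ReflTransGen.cases_head h1 with rfl | ⟨w, h3, h4⟩
  · exact .inl h2
  · exact .inr ⟨w, h3, z, h4, h2⟩

theorem Rep.tau {x y x'} (h : Rep x y) (ht : TauM x x') : ∃ y', YTaus y y' ∧ Rep x' y' := by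
  rcases h.cases with h | ⟨w, h1, h2⟩
  · obtain ⟨y', h1, h2⟩ := (loc_enc h).tau x' ht
    exact ⟨y', .single h1, h2⟩
  · rw [h1.uniq _ ht]; exact ⟨y, .refl, h2⟩

theorem Rep.taus {x y x'} (h : Rep x y) (ht : WTauM x x') : ∃ y', YTaus y y' ∧ Rep x' y' := by
  induction ht with
  | refl => exact ⟨y, .refl, h⟩
  | tail _ ht ih =>
    obtain ⟨y1, h1, h2⟩ := ih
    obtain ⟨y2, h3, h4⟩ := h2.tau ht
    exact ⟨y2, h1.trans h3, h4⟩

theorem Rep.inp {x y a R x'} (h : Rep x y) (ha : a ∉ HSetV) (hi : InM x a R x') :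
    (∃ y', YFlag y a y' ∧ Rep x' y') ∧ ∀ R', InM x a R' x' := by
  rcases h.cases with h | ⟨w, h1, h2⟩
  · exact (loc_enc h).inp a R x' ha hi
  · exact absurd (h1.noin _ _ _ hi) ha

theorem Rep.out {x y a R x'} (h : Rep x y) (hi : OutM x a R x') : a ∈ HSetV := by
  rcases h.cases with h | ⟨w, h1, h2⟩
  · exact (loc_enc h).out a R x' hi
  · exact h1.noout _ _ _ hi

theorem Rep.ytau {x y y'} (h : Rep x y) (ht : YTau y y') : ∃ x', WTauM x x' ∧ Rep x' y' := by
  obtain ⟨z, h1, h2⟩ := h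
  obtain ⟨x', h3, h4⟩ := (loc_enc h2).ytau y' ht
  exact ⟨x', (DetTs.wtau h1).tail h3, h4⟩

theorem Rep.ytaus {x y y'} (h : Rep x y) (ht : YTaus y y') : ∃ x', WTauM x x' ∧ Rep x' y' := by
  induction ht with
  | refl => exact ⟨x, .refl, h⟩
  | tail _ ht ih =>
    obtain ⟨y1, h1, h2⟩ := ih
    obtain ⟨y2, h3, h4⟩ := h2.ytau ht
    exact ⟨y2, h1.trans h3, h4⟩

theorem Rep.yflag {x y a y'} (h : Rep x y) (ht : YFlag y a y') :
    a ∉ HSetV ∧ ∃ x0 x', WTauM x x0 ∧ (∀ R, InM x0 a R x') ∧ Rep x' y' := by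
  obtain ⟨z, h1, h2⟩ := h
  obtain ⟨ha, x', h3, h4⟩ := (loc_enc h2).yflag a y' ht
  exact ⟨ha, z, x', DetTs.wtau h1, h3, h4⟩

/-! #### Weak bisimilarity of the coarse machine -/

def WFlag (y : YS) (a : Name) (y' : YS) : Prop :=
  ∃ u w, YTaus y u ∧ YFlag u a w ∧ YTaus w y'

def IsWB (R : YS → YS → Prop) : Prop :=
  (∀ y y', R y y' → R y' y) ∧ ∀ y y', R y y' →
    (∀ y1, YTau y y1 → ∃ y1', YTaus y' y1' ∧ R y1 y1') ∧
    (∀ a y1, YFlag y a y1 → ∃ y1', WFlag y' a y1' ∧ R y1 y1')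

def WB (y y' : YS) : Prop := ∃ R, IsWB R ∧ R y y'

theorem WB.isWB : IsWB WB := by
  refine ⟨fun y y' ⟨R, h, h'⟩ => ⟨R, h, h.1 _ _ h'⟩, fun y y' ⟨R, h, h'⟩ => ⟨fun y1 ht => ?_,
    fun a y1 ht => ?_⟩⟩
  · obtain ⟨u, h1, h2⟩ := (h.2 _ _ h').1 _ ht
    exact ⟨u, h1, R, h, h2⟩
  · obtain ⟨u, h1, h2⟩ := (h.2 _ _ h').2 _ _ ht
    exact ⟨u, h1, R, h, h2⟩

theorem WB.symm {y y'} (h : WB y y') : WB y' y := WB.isWB.1 _ _ h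

theorem WB.taus {y y' y1} (h : WB y y') (ht : YTaus y y1) : ∃ y1', YTaus y' y1' ∧ WB y1 y1' := by
  induction ht with
  | refl => exact ⟨y', .refl, h⟩
  | tail _ ht ih =>
    obtain ⟨u, h1, h2⟩ := ih
    obtain ⟨w, h3, h4⟩ := (WB.isWB.2 _ _ h2).1 _ ht
    exact ⟨w, h1.trans h3, h4⟩

theorem WB.flag {y y' a y1} (h : WB y y') (ht : WFlag y a y1) :
    ∃ y1', WFlag y' a y1' ∧ WB y1 y1' := by
  obtain ⟨u, w, h1, h2, h3⟩ := ht
  obtain ⟨u', h4, h5⟩ := h.taus h1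
  obtain ⟨w', ⟨c, d, h6, h7, h8⟩, h9⟩ := (WB.isWB.2 _ _ h5).2 _ _ h2
  obtain ⟨e, h10, h11⟩ := h9.taus h3
  exact ⟨e, ⟨c, d, h4.trans h6, h7, h8.trans h10⟩, h11⟩

theorem YFlag.weak {y a y'} (h : YFlag y a y') : WFlag y a y' := ⟨_, _, .refl, h, .refl⟩

theorem WB.refl (y : YS) : WB y y := by
  refine ⟨Eq, ⟨fun _ _ h => h.symm, ?_⟩, rfl⟩
  rintro y _ rfl
  exact ⟨fun y1 h => ⟨y1, .single h, rfl⟩, fun a y1 h => ⟨y1, h.weak, rfl⟩⟩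

theorem WB.trans {x y z} (h : WB x y) (h' : WB y z) : WB x z := by
  refine ⟨fun a c => ∃ b, WB a b ∧ WB b c, ⟨?_, ?_⟩, y, h, h'⟩
  · rintro a c ⟨b, h1, h2⟩; exact ⟨b, h2.symm, h1.symm⟩
  · rintro a c ⟨b, h1, h2⟩
    refine ⟨fun a1 ht => ?_, fun f a1 ht => ?_⟩
    · obtain ⟨b1, h3, h4⟩ := h1.taus (.single ht)
      obtain ⟨c1, h5, h6⟩ := h2.taus h3
      exact ⟨c1, h5, b1, h4, h6⟩
    · obtain ⟨b1, h3, h4⟩ := h1.flag ht.weak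
      obtain ⟨c1, h5, h6⟩ := h2.flag h3
      exact ⟨c1, h5, b1, h4, h6⟩

/-! #### Barbed equivalence and weak bisimilarity -/

theorem barbed_of_WB {P Q : Proc} {y y' : YS} (hP : Rep (comps P) y) (hQ : Rep (comps Q) y')
    (h : WB y y') : BarbedEquiv HSetV P Q := by
  refine ⟨fun P Q => ∃ x x' s y y', comps P = x + s ∧ comps Q = x' + s ∧ Ctx s ∧ Rep x y ∧
    Rep x' y' ∧ WB y y', ⟨?_, ?_⟩, comps P, comps Q, 0, y, y', by simp, by simp,
      ⟨.nil, rfl, by simp [fnames]⟩, hP, hQ, h⟩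
  · rintro P Q ⟨x, x', s, y, y', h1, h2, h3, h4, h5, h6⟩
    exact ⟨x', x, s, y', y, h2, h1, h3, h5, h4, h6.symm⟩
  clear h hP hQ P Q y y'
  rintro P Q ⟨x, x', s, y, y', hP, hQ, hs, hx, hx', hy⟩
  refine ⟨?_, ?_, ?_⟩
  · rintro (a | a) ⟨ha, R, P', hst⟩
    · have hst := step_sound hst
      simp only [StepM] at hst
      rw [hP] at hst
      rcases in_split hst with ⟨x1, h1, -⟩ | ⟨s1, h1, -⟩
      · obtain ⟨⟨y1, h2, -⟩, -⟩ := hx.inp ha h1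
        obtain ⟨y1', ⟨u, w, h3, h4, -⟩, -⟩ := hy.flag h2.weak
        obtain ⟨x2, h5, h6⟩ := hx'.ytaus h3
        obtain ⟨-, x3, x4, h7, h8, -⟩ := h6.yflag h4
        obtain ⟨Q', h9, h10⟩ := wtau_complete (P := Q) (m := x3 + s) (by
          rw [hQ]; exact WTauM.add_right (h5.trans h7) s)
        obtain ⟨Q2, h11⟩ := comps_surj (x4 + s)
        refine ⟨Q', h9, ha, .nil, Q2, step_complete ?_⟩
        rw [h10, h11]
        exact (h8 _).add_right s
      · obtain ⟨Q2, h11⟩ := comps_surj (x' + s1)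
        refine ⟨Q, .refl, ha, R, Q2, step_complete ?_⟩
        rw [hQ, h11, add_comm, add_comm x']
        exact h1.add_right x'
    · have hst := step_sound hst
      simp only [StepM] at hst
      rw [hP] at hst
      rcases cons_split hst with ⟨x1, h1, -⟩ | ⟨s1, h1, -⟩
      · exact absurd (hx.out h1) ha
      · obtain ⟨Q2, h11⟩ := comps_surj (x' + s1)
        refine ⟨Q, .refl, ha, R, Q2, step_complete ?_⟩
        rw [hQ, h11, add_comm, add_comm x']
        exact OutM.add_right h1 x'
  · intro S hS
    refine ⟨x, x', s + comps S, y, y', by simp only [comps, hP]; abel,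
      by simp only [comps, hQ]; abel, hs.add ⟨S, rfl, ?_⟩, hx, hx', hy⟩
    intro a ha haH
    have : a ∈ (S.fnames : Set Name) ∩ HSetV := ⟨ha, haH⟩
    rw [hS] at this
    exact this
  · intro P' hst
    have hst := step_sound hst
    simp only [StepM] at hst
    rw [hP] at hst
    have fin : ∀ q', WTauM (x' + s) q' → ∃ Q', WTau Q Q' ∧ comps Q' = q' := by
      intro q' h; rw [← hQ] at h; exact wtau_complete h
    rcases tau_split hst with ⟨x1, h1, h2⟩ | ⟨s1, h1, h2⟩ | ⟨a, R, x1, s1, h1, h2, -⟩ |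
      ⟨a, R, x1, s1, h1, h2, h3⟩
    · obtain ⟨y1, h3, h4⟩ := hx.tau h1
      obtain ⟨y1', h5, h6⟩ := hy.taus h3
      obtain ⟨x1', h7, h8⟩ := hx'.ytaus h5
      obtain ⟨Q', h9, h10⟩ := fin _ (WTauM.add_right h7 s)
      exact ⟨Q', h9, x1, x1', s, y1, y1', h2, h10, hs, h4, h8, h6⟩
    · obtain ⟨Q', h9, h10⟩ := fin _ (.single (h1.add_left x'))
      exact ⟨Q', h9, x, x', s1, y, y', h2, h10, hs.tau h1, hx, hx', hy⟩
    · exact absurd (hx.out h1) (hs.inM h2)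
    · obtain ⟨ha, hs1⟩ := hs.out h2
      obtain ⟨⟨y1, h4, h5⟩, -⟩ := hx.inp ha h1
      obtain ⟨y1', ⟨u, w, h6, h7, h8⟩, h9⟩ := hy.flag h4.weak
      obtain ⟨x2, h10, h11⟩ := hx'.ytaus h6
      obtain ⟨-, x3, x4, h12, h13, h14⟩ := h11.yflag h7
      obtain ⟨x5, h15, h16⟩ := h14.ytaus h8
      have hc : TauM (x3 + s) (x4 + s1) := by
        rw [add_comm, add_comm x4]; exact comm_M h2 (h13 R)
      obtain ⟨Q', h17, h18⟩ := fin _ (((WTauM.add_right (h10.trans h12) s).tail hc).trans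
        (WTauM.add_right h15 s1))
      exact ⟨Q', h17, x1, x5, s1, y1, y1', h3, h18, hs1, h5, h16, h9⟩

theorem wtau_add_out {x y a q} (hx : Rep x y) (ha : a ∉ HSetV)
    (h : WTauM (x + {cout a (cl .nil)}) q) :
    (∃ x', q = x' + {cout a (cl .nil)}) ∨ ∃ y', WFlag y a y' ∧ Rep q y' := by
  suffices (∃ x' y', q = x' + {cout a (cl .nil)} ∧ YTaus y y' ∧ Rep x' y') ∨
      ∃ y', WFlag y a y' ∧ Rep q y' by
    rcases this with ⟨x', y', h, -⟩ | h
    · exact .inl ⟨x', h⟩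
    · exact .inr h
  induction h with
  | refl => exact .inl ⟨x, y, rfl, .refl, hx⟩
  | tail _ ht ih =>
    rcases ih with ⟨x', y', rfl, h2, h3⟩ | ⟨y', ⟨u, w, h1, h2, h3⟩, h4⟩
    · rcases tau_split ht with ⟨x1, h1, h4⟩ | ⟨s1, h1, -⟩ | ⟨b, R, x1, s1, -, h1, -⟩ |
        ⟨b, R, x1, s1, h1, h4, h5⟩
      · obtain ⟨y2, h5, h6⟩ := h3.tau h1
        exact .inl ⟨x1, y2, h4, h2.trans h5, h6⟩
      · obtain ⟨b, R, B, rest, h1, -⟩ := h1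
        have := congrArg Multiset.card h1
        simp at this
      · obtain ⟨B, rest, h1, -⟩ := h1
        have : cin b (cl B) ∈ ({cout a (cl .nil)} : Soup) := by rw [h1]; simp
        simp at this
      · unfold OutM at h4
        rw [← Multiset.cons_zero, Multiset.cons_eq_cons] at h4
        rcases h4 with ⟨h6, rfl⟩ | ⟨_, _, h1, _⟩
        · injection h6 with h6 h7
          subst h6
          obtain ⟨⟨y1, h8, h9⟩, -⟩ := h3.inp ha h1
          right
          refine ⟨y1, ⟨y', y1, h2, h8, .refl⟩, ?_⟩
          rw [h5, add_zero]; exact h9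
        · simp at h1
    · obtain ⟨y2, h5, h6⟩ := h4.tau ht
      exact .inr ⟨y2, ⟨u, w, h1, h2, h3.trans h5⟩, h6⟩

theorem BarbedEquiv.wtau {P Q P'} (h : BarbedEquiv HSetV P Q) (ht : WTau P P') :
    ∃ Q', WTau Q Q' ∧ BarbedEquiv HSetV P' Q' := by
  obtain ⟨R, hR, h⟩ := h
  suffices ∃ Q', WTau Q Q' ∧ R P' Q' by
    obtain ⟨Q', h1, h2⟩ := this
    exact ⟨Q', h1, R, hR, h2⟩
  induction ht with
  | refl => exact ⟨Q, .refl, h⟩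
  | tail _ ht ih =>
    obtain ⟨Q', h1, h2⟩ := ih
    obtain ⟨Q2, h3, h4⟩ := (hR.2 _ _ h2).2.2 _ ht
    exact ⟨Q2, h1.trans h3, h4⟩

theorem WB_of_barbed {P Q : Proc} {y y' : YS} (hP : Rep (comps P) y) (hQ : Rep (comps Q) y')
    (h : BarbedEquiv HSetV P Q) : WB y y' := by
  refine ⟨fun y y' => ∃ P Q, Rep (comps P) y ∧ Rep (comps Q) y' ∧ BarbedEquiv HSetV P Q,
    ⟨?_, ?_⟩, P, Q, hP, hQ, h⟩
  · rintro y y' ⟨P, Q, h1, h2, R, h3, h4⟩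
    exact ⟨Q, P, h2, h1, R, h3, h3.1 h4⟩
  clear h hP hQ P Q y y'
  rintro y y' ⟨P, Q, hP, hQ, h⟩
  refine ⟨fun y1 ht => ?_, fun a y1 ht => ?_⟩
  · obtain ⟨x1, h1, h2⟩ := hP.ytau ht
    obtain ⟨P1, h3, rfl⟩ := wtau_complete h1
    obtain ⟨Q1, h4, h5⟩ := BarbedEquiv.wtau h h3
    obtain ⟨y1', h6, h7⟩ := hQ.taus (wtau_sound h4)
    exact ⟨y1', h6, P1, Q1, h2, h7, h5⟩
  · obtain ⟨ha, x0, x1, h1, h2, h3⟩ := hP.yflag ht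
    have hpar : BarbedEquiv HSetV (.par P (.out a .nil)) (.par Q (.out a .nil)) := by
      obtain ⟨R, hR, h⟩ := h
      refine ⟨R, hR, (hR.2 _ _ h).2.1 _ ?_⟩
      simpa [fnames] using ha
    have hw : WTauM (comps (.par P (.out a .nil))) x1 := by
      refine (WTauM.add_right h1 _).tail ?_
      rw [add_comm]
      have := comm_M (m := {cout a (cl .nil)}) (m' := 0) (a := a) (R := .nil)
        (by simp [OutM]) (h2 .nil)
      rwa [zero_add] at this
    obtain ⟨P1, h4, rfl⟩ := wtau_complete hw
    obtain ⟨Q1, h5, h6⟩ := BarbedEquiv.wtau hpar h4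
    rcases wtau_add_out hQ ha (wtau_sound h5) with ⟨x', h7⟩ | ⟨y1', h7, h8⟩
    · exfalso
      obtain ⟨R, hR, h6⟩ := h6
      have hb : StrongBarb HSetV Q1 (.outb a) := by
        obtain ⟨T, rfl⟩ := comps_surj x'
        refine ⟨ha, .nil, T, step_complete ?_⟩
        rw [h7, add_comm]
        simp [StepM, OutM]
      obtain ⟨P2, h9, -, R', P3, h10⟩ := (hR.2 _ _ (hR.1 h6)).1 _ hb
      obtain ⟨y2, -, h11⟩ := h3.taus (wtau_sound h9)
      exact ha (h11.out (step_sound h10))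
    · exact ⟨y1', h7, P1, Q1, h3, h8, h6⟩

theorem barbed_iff (t s : CTm) (n : ℕ) :
    BarbedEquiv HSetV (trEvV t [] n) (trEvV s [] n) ↔ WB (ev t [] n) (ev s [] n) :=
  ⟨WB_of_barbed (.of_enc rfl) (.of_enc rfl), barbed_of_WB (.of_enc rfl) (.of_enc rfl)⟩



/-! #### The CK machine and the coarse machine -/

/-- Embedding of CK configurations into the coarse machine. -/
def emb : CKConf → ℕ → YS
  | .ev t π, n => ev t π n
  | .cont π v, n => contS π v n

def fvConf : CKConf → Finset ℕ
  | .ev t π => fvC t ∪ fvSt π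
  | .cont π v => fvSt π ∪ fvC v

theorem emb_step {C D} (h : CKStep C D) (n : ℕ) : YTaus (emb C n) (emb D n) := by
  cases h with
  | fn => exact .single .app
  | switch h => exact .single (.switch h)
  | arg => exact .refl
  | beta => exact .refl

theorem emb_steps {C D} (h : CKSteps C D) (n : ℕ) : YTaus (emb C n) (emb D n) := by
  induction h with
  | refl => exact .refl
  | tail _ h ih => exact ih.trans (emb_step h n)

theorem ev_tau {t π n y} (h : YTau (ev t π n) y) : ∃ D, CKStep (.ev t π) D ∧ y = emb D n := by
  cases h with
  | app => exact ⟨_, .fn, rfl⟩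
  | switch h => exact ⟨_, .switch h, rfl⟩

theorem emb_tau {D n y} (h : YTau (emb D n) y) : ∃ D1, CKSteps D D1 ∧ y = emb D1 n := by
  cases D with
  | ev t π =>
    obtain ⟨D, h1, h2⟩ := ev_tau h
    exact ⟨D, .single h1, h2⟩
  | cont π v =>
    match π, h with
    | [], h => cases h
    | .argI t :: π, h =>
      obtain ⟨D, h1, h2⟩ := ev_tau h
      exact ⟨D, .head .arg (.single h1), h2⟩
    | .funI (.lam t) :: π, h =>
      obtain ⟨D, h1, h2⟩ := ev_tau h
      exact ⟨D, .head .beta (.single h1), h2⟩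
    | .funI (.fvar f) :: π, h => cases h
    | .funI (.bvar f) :: π, h => cases h
    | .funI (.app f g) :: π, h => cases h

theorem emb_taus {D n y} (h : YTaus (emb D n) y) : ∃ D1, CKSteps D D1 ∧ y = emb D1 n := by
  induction h with
  | refl => exact ⟨D, .refl, rfl⟩
  | tail _ h ih =>
    obtain ⟨D1, h1, rfl⟩ := ih
    obtain ⟨D2, h2, rfl⟩ := emb_tau h
    exact ⟨D2, h1.trans h2, rfl⟩

theorem emb_flag {D n a y} (h : YFlag (emb D n) a y) :
    (∃ v, D = .cont [] v ∧ a = lamF ∧ y = contS [.funI v] (.fvar n) (n + 1)) ∨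
    (∃ f π v, D = .cont (.funI (.fvar f) :: π) v ∧ YFlag (headS f π v n) a y) := by
  cases D with
  | ev t π => cases h
  | cont π v =>
    match π, h with
    | [], h => cases h; exact .inl ⟨v, rfl, rfl, rfl⟩
    | .argI t :: π, h => cases h
    | .funI (.lam t) :: π, h => cases h
    | .funI (.fvar f) :: π, h => exact .inr ⟨f, π, v, rfl, h⟩
    | .funI (.bvar f) :: π, h => cases h
    | .funI (.app f g) :: π, h => cases h

theorem head_flag {f π v n a y} (h : YFlag (headS f π v n) a y) :
    (f = 0 ∧ a = zN ∧ y = zst π v n) ∨ ∃ g, f = g + 1 ∧ a = sucN ∧ y = headS g π v n := by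
  cases h with
  | suc => exact .inr ⟨_, rfl, rfl, rfl⟩
  | z => exact .inl ⟨rfl, rfl, rfl⟩

theorem ck_det {C D D'} (h : CKStep C D) (h' : CKStep C D') : D = D' := by
  cases h with
  | fn =>
    cases h' with
    | fn => rfl
    | switch h => exact h.elim
  | switch hv =>
    cases h' with
    | fn => exact hv.elim
    | switch h => rfl
  | arg => cases h'; rfl
  | beta => cases h'; rfl

theorem ck_conf {C D E} (h : CKSteps C D) (h' : CKSteps C E) (hE : ∀ F, ¬ CKStep E F) :
    CKSteps D E := by
  induction h with
  | refl => exact h'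
  | tail _ h ih =>
    rcases Relation.ReflTransGen.cases_head ih with h1 | ⟨c, h1, h2⟩
    · subst h1; exact (hE _ h).elim
    · rw [ck_det h h1]; exact h2

theorem no_step_nil {v F} : ¬ CKStep (.cont [] v) F := by
  intro h; cases h

theorem no_step_head {f π v F} : ¬ CKStep (.cont (.funI (.fvar f) :: π) v) F := by
  intro h; cases h

theorem fvC_lift (d : ℕ) (t : CTm) : ∀ k, fvC (t.liftC d k) = fvC t := by
  induction t with
  | fvar f => intro k; rfl
  | bvar m => intro k; simp only [CTm.liftC]; split <;> rfl
  | lam t ih => intro k; simp [CTm.liftC, fvC, ih]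
  | app t s ih1 ih2 => intro k; simp [CTm.liftC, fvC, ih1, ih2]

theorem fvC_subst (v t : CTm) : ∀ k, fvC (t.substC k v) ⊆ fvC t ∪ fvC v := by
  induction t with
  | fvar f => intro k; simp [CTm.substC, fvC]
  | bvar m =>
    intro k; simp only [CTm.substC]
    split
    · simp [fvC_lift]
    · split <;> simp [fvC]
  | lam t ih => intro k; simpa [CTm.substC, fvC] using ih (k + 1)
  | app t s ih1 ih2 =>
    intro k f hf
    simp only [CTm.substC, fvC, Finset.mem_union] at hf ⊢
    have h1 := @ih1 k f
    have h2 := @ih2 k f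
    simp only [Finset.mem_union] at h1 h2
    tauto

theorem fv_step {C D} (h : CKStep C D) : fvConf D ⊆ fvConf C := by
  cases h with
  | fn => intro f; simp only [fvConf, fvC, fvSt, fvItem, Finset.mem_union]; tauto
  | switch h => intro f; simp only [fvConf, Finset.mem_union]; tauto
  | arg => intro f; simp only [fvConf, fvSt, fvItem, Finset.mem_union]; tauto
  | @beta t π v =>
    intro f
    have := @fvC_subst v t 0 f
    simp only [fvConf, fvSt, fvItem, fvC, Finset.mem_union] at this ⊢
    tauto

theorem fv_steps {C D} (h : CKSteps C D) : fvConf D ⊆ fvConf C := by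
  induction h with
  | refl => exact subset_rfl
  | tail _ h ih => exact (fv_step h).trans ih

theorem WB_of_det {y y1} (h : YTau y y1) (hd : ∀ y2, YTau y y2 → y2 = y1)
    (hf : ∀ a w, ¬ YFlag y a w) : WB y y1 := by
  refine ⟨fun a b => a = b ∨ (a = y ∧ b = y1) ∨ (a = y1 ∧ b = y), ⟨?_, ?_⟩, .inr (.inl ⟨rfl, rfl⟩)⟩
  · rintro a b (h | h | h)
    · exact .inl h.symm
    · exact .inr (.inr ⟨h.2, h.1⟩)
    · exact .inr (.inl ⟨h.2, h.1⟩)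
  · rintro a b (rfl | ⟨rfl, rfl⟩ | ⟨rfl, rfl⟩)
    · exact ⟨fun y1 h => ⟨y1, .single h, .inl rfl⟩, fun a y1 h => ⟨y1, h.weak, .inl rfl⟩⟩
    · exact ⟨fun y2 h2 => ⟨_, .refl, .inl (hd _ h2)⟩, fun a w h2 => (hf _ _ h2).elim⟩
    · exact ⟨fun y2 h2 => ⟨y2, .head h (.single h2), .inl rfl⟩,
        fun a w h2 => ⟨w, ⟨_, _, .single h, h2, .refl⟩, .inl rfl⟩⟩

theorem emb_step_WB {C D} (h : CKStep C D) (n : ℕ) : WB (emb C n) (emb D n) := by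
  have aux : ∀ {t π D}, CKStep (.ev t π) D → YTau (ev t π n) (emb D n) →
      WB (ev t π n) (emb D n) := by
    intro t π D h1 h2
    refine WB_of_det h2 (fun y hy => ?_) (fun a w hw => by cases hw)
    obtain ⟨E, h3, rfl⟩ := ev_tau hy
    rw [ck_det h1 h3]
  cases h with
  | fn => exact aux .fn .app
  | switch h => exact aux (.switch h) (.switch h)
  | arg => exact WB.refl _
  | beta => exact WB.refl _

theorem emb_steps_WB {C D} (h : CKSteps C D) (n : ℕ) : WB (emb C n) (emb D n) := by
  induction h with
  | refl => exact WB.refl _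
  | tail _ h ih => exact ih.trans (emb_step_WB h n)

theorem emb_taus_WB {C n y} (h : YTaus (emb C n) y) : WB (emb C n) y := by
  obtain ⟨D, h1, rfl⟩ := emb_taus h
  exact emb_steps_WB h1 n

/-! #### From normal-form bisimulations to weak bisimulations -/

/-- Data attached to a pair of stuck configurations. -/
def StuckRel (R : CKConf → CKConf → Prop) (π : CStack) (v : CTm) (π' : CStack) (v' : CTm)
    (n : ℕ) : Prop :=
  R (.cont [.funI v] (.fvar n)) (.cont [.funI v'] (.fvar n)) ∧
  R (.cont π (.fvar n)) (.cont π' (.fvar n)) ∧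
  ∀ f ∈ fvC v ∪ fvC v' ∪ fvSt π ∪ fvSt π', f < n

inductive NX (R : CKConf → CKConf → Prop) : YS → YS → Prop
  | conf {C C' D D' n} : R C C' → CKSteps C D → CKSteps C' D' →
      (∀ f ∈ fvConf C ∪ fvConf C', f < n) → NX R (emb D n) (emb D' n)
  | head {f π v π' v' n} : StuckRel R π v π' v' n → NX R (headS f π v n) (headS f π' v' n)
  | zst {π v π' v' n} : StuckRel R π v π' v' n → NX R (zst π v n) (zst π' v' n)
  | aval {π v π' v' n} : StuckRel R π v π' v' n → NX R (aval v n) (aval v' n)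
  | actx {π v π' v' n} : StuckRel R π v π' v' n → NX R (actx π n) (actx π' n)

theorem StuckRel.symm {R : CKConf → CKConf → Prop} (hR : Symmetric R) {π v π' v' n}
    (h : StuckRel R π v π' v' n) : StuckRel R π' v' π v n := by
  refine ⟨hR h.1, hR h.2.1, fun f hf => h.2.2 f ?_⟩
  simp only [Finset.mem_union] at hf ⊢
  tauto

theorem StuckRel.nval {R : CKConf → CKConf → Prop} {π v π' v' n}
    (h : StuckRel R π v π' v' n) : NX R (contS [.funI v] (.fvar n) (n + 1))
      (contS [.funI v'] (.fvar n) (n + 1)) := by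
  refine .conf (D := .cont [.funI v] (.fvar n)) (D' := .cont [.funI v'] (.fvar n))
    h.1 .refl .refl (fun f hf => ?_)
  have := h.2.2 f
  simp only [fvConf, fvSt, fvItem, fvC, Finset.mem_union, Finset.mem_singleton,
    Finset.notMem_empty] at hf this
  by_cases hfn : f = n
  · omega
  · have : f < n := this (by tauto)
    omega

theorem StuckRel.nctx {R : CKConf → CKConf → Prop} {π v π' v' n}
    (h : StuckRel R π v π' v' n) : NX R (contS π (.fvar n) (n + 1))
      (contS π' (.fvar n) (n + 1)) := by
  refine .conf (D := .cont π (.fvar n)) (D' := .cont π' (.fvar n))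
    h.2.1 .refl .refl (fun f hf => ?_)
  have := h.2.2 f
  simp only [fvConf, fvC, Finset.mem_union, Finset.mem_singleton] at hf this
  by_cases hfn : f = n
  · omega
  · have : f < n := this (by tauto)
    omega

theorem NX_isWB {R} (hR : IsNFBisimV R) : IsWB (NX R) := by
  obtain ⟨hs, hR⟩ := hR
  refine ⟨?_, ?_⟩
  · intro y y' h
    cases h with
    | conf h1 h2 h3 h4 =>
      refine .conf (hs h1) h3 h2 (fun f hf => h4 f ?_)
      rwa [Finset.union_comm]
    | head h => exact .head (h.symm hs)
    | zst h => exact .zst (h.symm hs)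
    | aval h => exact .aval (h.symm hs)
    | actx h => exact .actx (h.symm hs)
  · intro y y' h
    cases h with
    | @conf C C' D D' n h1 h2 h3 h4 =>
      refine ⟨fun y1 ht => ?_, fun a y1 ht => ?_⟩
      · obtain ⟨D1, h5, rfl⟩ := emb_tau ht
        exact ⟨_, .refl, .conf h1 (h2.trans h5) h3 h4⟩
      · rcases emb_flag ht with ⟨v, rfl, rfl, rfl⟩ | ⟨f, π, v, rfl, ht⟩
        · obtain ⟨v', h5, h6⟩ := (hR _ _ h1).1 v h2
          have h7 := ck_conf h3 h5 (fun F => no_step_nil)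
          have e1 := fv_steps h2
          have e2 := fv_steps h5
          have hlt : ∀ f, f ∈ fvC v ∪ fvC v' → f < n := by
            intro f hf
            refine h4 f ?_
            have e1 := @e1 f
            have e2 := @e2 f
            simp only [fvConf, fvSt, Finset.mem_union, Finset.notMem_empty, false_or]
              at hf e1 e2 ⊢
            tauto
          refine ⟨_, ⟨_, _, emb_steps h7 n, .lam, .refl⟩, ?_⟩
          refine .conf (D := .cont [.funI v] (.fvar n)) (D' := .cont [.funI v'] (.fvar n))
            (h6 n (fun h => lt_irrefl _ (hlt n h))) .refl .refl (fun f hf => ?_)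
          have := hlt f
          simp only [fvConf, fvSt, fvItem, fvC, Finset.mem_union, Finset.mem_singleton,
            Finset.notMem_empty] at hf this
          by_cases hfn : f = n
          · omega
          · have : f < n := this (by tauto)
            omega
        · obtain ⟨π', v', h5, h6⟩ := (hR _ _ h1).2 f π v h2
          have h7 := ck_conf h3 h5 (fun F => no_step_head)
          have e1 := fv_steps h2
          have e2 := fv_steps h5
          have hlt : ∀ f, f ∈ fvC v ∪ fvC v' ∪ fvSt π ∪ fvSt π' → f < n := by
            intro f hf
            refine h4 f ?_
            have e1 := @e1 f
            have e2 := @e2 f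
            simp only [fvConf, fvSt, Finset.mem_union] at hf e1 e2 ⊢
            tauto
          have h8 := h6 n (fun h => lt_irrefl _ (hlt n h))
          have hS : StuckRel R π v π' v' n := ⟨h8.1, h8.2, hlt⟩
          have h9 := emb_steps h7 n
          cases ht with
          | suc => exact ⟨_, ⟨_, _, h9, .suc, .refl⟩, .head hS⟩
          | z => exact ⟨_, ⟨_, _, h9, .z, .refl⟩, .zst hS⟩
    | head h =>
      refine ⟨fun y1 ht => (by cases ht), fun a y1 ht => ?_⟩
      cases ht with
      | suc => exact ⟨_, YFlag.weak .suc, .head h⟩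
      | z => exact ⟨_, YFlag.weak .z, .zst h⟩
    | zst h =>
      refine ⟨fun y1 ht => ?_, fun a y1 ht => by cases ht⟩
      cases ht with
      | chL => exact ⟨_, .single .chL, .aval h⟩
      | chR => exact ⟨_, .single .chR, .actx h⟩
    | aval h =>
      refine ⟨fun y1 ht => (by cases ht), fun a y1 ht => ?_⟩
      cases ht
      exact ⟨_, YFlag.weak .val, h.nval⟩
    | actx h =>
      refine ⟨fun y1 ht => (by cases ht), fun a y1 ht => ?_⟩
      cases ht
      exact ⟨_, YFlag.weak .ctx, h.nctx⟩

/-! #### Renamings of free variables -/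

def renT (σ : ℕ → ℕ) : CTm → CTm
  | .fvar f => .fvar (σ f)
  | .bvar m => .bvar m
  | .lam t => .lam (renT σ t)
  | .app t s => .app (renT σ t) (renT σ s)

def renI (σ : ℕ → ℕ) : CItem → CItem
  | .argI t => .argI (renT σ t)
  | .funI t => .funI (renT σ t)

def renS (σ : ℕ → ℕ) : CStack → CStack
  | [] => []
  | i :: π => renI σ i :: renS σ π

def renC (σ : ℕ → ℕ) : CKConf → CKConf
  | .ev t π => .ev (renT σ t) (renS σ π)
  | .cont π v => .cont (renS σ π) (renT σ v)

theorem renT_lift (σ : ℕ → ℕ) (d : ℕ) (t : CTm) :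
    ∀ k, renT σ (t.liftC d k) = (renT σ t).liftC d k := by
  induction t with
  | fvar f => intro k; rfl
  | bvar m => intro k; simp only [CTm.liftC, renT]; split <;> rfl
  | lam t ih => intro k; simp [CTm.liftC, renT, ih]
  | app t s ih1 ih2 => intro k; simp [CTm.liftC, renT, ih1, ih2]

theorem renT_subst (σ : ℕ → ℕ) (v t : CTm) :
    ∀ k, renT σ (t.substC k v) = (renT σ t).substC k (renT σ v) := by
  induction t with
  | fvar f => intro k; rfl
  | bvar m =>
    intro k; simp only [CTm.substC, renT]
    split
    · exact renT_lift ..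
    · split <;> rfl
  | lam t ih => intro k; simp [CTm.substC, renT, ih]
  | app t s ih1 ih2 => intro k; simp [CTm.substC, renT, ih1, ih2]

theorem renT_val {σ : ℕ → ℕ} {t : CTm} : CIsVal (renT σ t) ↔ CIsVal t := by
  cases t <;> rfl

theorem ren_step (σ : ℕ → ℕ) {C D} (h : CKStep C D) : CKStep (renC σ C) (renC σ D) := by
  cases h with
  | fn => exact .fn
  | switch h => exact .switch (renT_val.2 h)
  | arg => exact .arg
  | beta => simp only [renC, renT_subst]; exact .beta

theorem ren_steps (σ : ℕ → ℕ) {C D} (h : CKSteps C D) : CKSteps (renC σ C) (renC σ D) := by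
  induction h with
  | refl => exact .refl
  | tail _ h ih => exact ih.tail (ren_step σ h)

theorem ren_step_inv {σ : ℕ → ℕ} {C E} (h : CKStep (renC σ C) E) :
    ∃ D, CKStep C D ∧ E = renC σ D := by
  cases C with
  | ev t π =>
    by_cases ht : CIsVal t
    · exact ⟨_, .switch ht, ck_det h (.switch (renT_val.2 ht))⟩
    · cases t with
      | app t s => exact ⟨_, .fn, ck_det h .fn⟩
      | _ => exact (ht trivial).elim
  | cont π v =>
    match π, h with
    | [], h => cases h
    | .argI t :: π, h => exact ⟨_, .arg, ck_det h .arg⟩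
    | .funI (.lam t) :: π, h => exact ⟨_, .beta, ck_det h (ren_step σ .beta)⟩
    | .funI (.fvar f) :: π, h => cases h
    | .funI (.bvar f) :: π, h => cases h
    | .funI (.app f g) :: π, h => cases h

theorem ren_steps_inv {σ : ℕ → ℕ} {C E} (h : CKSteps (renC σ C) E) :
    ∃ D, CKSteps C D ∧ E = renC σ D := by
  induction h with
  | refl => exact ⟨C, .refl, rfl⟩
  | tail _ h ih =>
    obtain ⟨D, h1, rfl⟩ := ih
    obtain ⟨D', h2, rfl⟩ := ren_step_inv h
    exact ⟨D', h1.tail h2, rfl⟩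

theorem renT_id (t : CTm) : renT id t = t := by
  induction t <;> simp_all [renT]

theorem renT_congr {σ τ : ℕ → ℕ} {t : CTm} (h : ∀ f ∈ fvC t, σ f = τ f) : renT σ t = renT τ t := by
  induction t with
  | fvar f => simp [renT, h f (by simp [fvC])]
  | bvar m => rfl
  | lam t ih => simp [renT, ih h]
  | app t s ih1 ih2 =>
    simp only [fvC, Finset.mem_union] at h
    simp [renT, ih1 (fun f hf => h f (.inl hf)), ih2 (fun f hf => h f (.inr hf))]

theorem renS_congr {σ τ : ℕ → ℕ} {π : CStack} (h : ∀ f ∈ fvSt π, σ f = τ f) :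
    renS σ π = renS τ π := by
  induction π with
  | nil => rfl
  | cons i π ih =>
    simp only [fvSt, Finset.mem_union] at h
    rw [renS, renS, ih (fun f hf => h f (.inr hf))]
    cases i with
    | argI t => rw [renI, renI, renT_congr (fun f hf => h f (.inl hf))]
    | funI t => rw [renI, renI, renT_congr (fun f hf => h f (.inl hf))]

theorem upd_congr {σ : ℕ → ℕ} {f n : ℕ} {S : Finset ℕ} (h : f ∉ S) :
    ∀ g ∈ S, Function.update σ f n g = σ g := by
  intro g hg
  have e : g ≠ f := by rintro rfl; exact h hg
  exact Function.update_of_ne e _ _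

theorem renC_nil_inv {σ : ℕ → ℕ} {C v} (h : .cont [] v = renC σ C) :
    ∃ v0, C = .cont [] v0 ∧ v = renT σ v0 := by
  match C, h with
  | .cont [] v0, h => cases h; exact ⟨_, rfl, rfl⟩

theorem renC_head_inv {σ : ℕ → ℕ} {C f π v} (h : .cont (.funI (.fvar f) :: π) v = renC σ C) :
    ∃ f0 π0 v0, C = .cont (.funI (.fvar f0) :: π0) v0 ∧ f = σ f0 ∧ π = renS σ π0 ∧
      v = renT σ v0 := by
  match C, h with
  | .cont (.funI (.fvar f0) :: π0) v0, h => cases h; exact ⟨_, _, _, rfl, rfl, rfl, rfl⟩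

/-! #### From weak bisimilarity to normal-form bisimilarity -/

theorem head_taus {f π v n y} (h : YTaus (headS f π v n) y) : y = headS f π v n := by
  rcases Relation.ReflTransGen.cases_head h with h | ⟨c, h, _⟩
  · exact h.symm
  · cases h

theorem zst_taus {π v n y} (h : YTaus (zst π v n) y) :
    y = zst π v n ∨ y = aval v n ∨ y = actx π n := by
  rcases Relation.ReflTransGen.cases_head h with h | ⟨c, h, h'⟩
  · exact .inl h.symm
  · cases h <;> (rcases Relation.ReflTransGen.cases_head h' with h | ⟨c, h, _⟩)
    · exact .inr (.inl h.symm)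
    · cases h
    · exact .inr (.inr h.symm)
    · cases h

theorem head_WB {f : ℕ} : ∀ {f' π v π' v' n}, WB (headS f π v n) (headS f' π' v' n) →
    f = f' ∧ ∃ y, YTaus (zst π' v' n) y ∧ WB (zst π v n) y := by
  induction f with
  | zero =>
    intro f' π v π' v' n h
    obtain ⟨y, ⟨u, w, h1, h2, h3⟩, h4⟩ := h.flag (YFlag.weak .z)
    rw [head_taus h1] at h2
    rcases head_flag h2 with ⟨rfl, -, rfl⟩ | ⟨g, -, h, -⟩
    · exact ⟨rfl, y, h3, h4⟩
    · exact absurd h (by decide)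
  | succ f ih =>
    intro f' π v π' v' n h
    obtain ⟨y, ⟨u, w, h1, h2, h3⟩, h4⟩ := h.flag (YFlag.weak .suc)
    rw [head_taus h1] at h2
    rcases head_flag h2 with ⟨-, h, -⟩ | ⟨g, rfl, -, rfl⟩
    · exact absurd h (by decide)
    · rw [head_taus h3] at h4
      obtain ⟨rfl, h5⟩ := ih h4
      exact ⟨rfl, h5⟩

theorem aval_flag {v n a y} (h : YFlag (aval v n) a y) :
    a = valF ∧ y = contS [.funI v] (.fvar n) (n + 1) := by
  cases h; exact ⟨rfl, rfl⟩

theorem actx_flag {π n a y} (h : YFlag (actx π n) a y) :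
    a = ctxF ∧ y = contS π (.fvar n) (n + 1) := by
  cases h; exact ⟨rfl, rfl⟩

theorem zst_WB {π v π' v' n y} (h : YTaus (zst π' v' n) y) (hw : WB (zst π v n) y) :
    WB (contS [.funI v] (.fvar n) (n + 1)) (contS [.funI v'] (.fvar n) (n + 1)) ∧
    WB (contS π (.fvar n) (n + 1)) (contS π' (.fvar n) (n + 1)) := by
  constructor
  · obtain ⟨y3, ⟨u, w, h1, h2, h3⟩, h4⟩ := hw.flag ⟨_, _, .single .chL, .val, .refl⟩
    rcases zst_taus (h.trans h1) with rfl | rfl | rfl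
    · cases h2
    · obtain ⟨-, rfl⟩ := aval_flag h2
      exact h4.trans (emb_taus_WB (C := .cont [.funI v'] (.fvar n)) h3).symm
    · exact absurd (actx_flag h2).1 (by decide)
  · obtain ⟨y3, ⟨u, w, h1, h2, h3⟩, h4⟩ := hw.flag ⟨_, _, .single .chR, .ctx, .refl⟩
    rcases zst_taus (h.trans h1) with rfl | rfl | rfl
    · cases h2
    · exact absurd (aval_flag h2).1 (by decide)
    · obtain ⟨-, rfl⟩ := actx_flag h2
      exact h4.trans (emb_taus_WB (C := .cont π' (.fvar n)) h3).symm

/-- Weak bisimilarity of configurations up to an injective renaming. -/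
def RR (C C' : CKConf) : Prop := ∃ (σ : ℕ → ℕ) (n : ℕ),
  Set.InjOn σ (fvConf C ∪ fvConf C' : Finset ℕ) ∧ (∀ f ∈ fvConf C ∪ fvConf C', σ f < n) ∧
  WB (emb (renC σ C) n) (emb (renC σ C') n)

theorem RR_mk {σ : ℕ → ℕ} {n f : ℕ} {S : Finset ℕ} (hinj : Set.InjOn σ S)
    (hlt : ∀ g ∈ S, σ g < n) {E E' : CKConf}
    (hE : ∀ g ∈ fvConf E ∪ fvConf E', g = f ∨ g ∈ S)
    (h : WB (emb (renC (Function.update σ f n) E) (n + 1))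
      (emb (renC (Function.update σ f n) E') (n + 1))) : RR E E' := by
  refine ⟨_, _, ?_, ?_, h⟩
  · intro a ha b hb hab
    have ha := hE a ha
    have hb := hE b hb
    by_cases e1 : a = f <;> by_cases e2 : b = f
    · rw [e1, e2]
    · subst e1
      have := hlt b (hb.resolve_left e2)
      rw [Function.update_self, Function.update_of_ne e2] at hab
      omega
    · subst e2
      have := hlt a (ha.resolve_left e1)
      rw [Function.update_self, Function.update_of_ne e1] at hab
      omega
    · rw [Function.update_of_ne e1, Function.update_of_ne e2] at hab
      exact hinj (ha.resolve_left e1) (hb.resolve_left e2) hab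
  · intro g hg
    by_cases e : g = f
    · subst e; rw [Function.update_self]; omega
    · have := hlt g ((hE g hg).resolve_left e)
      rw [Function.update_of_ne e]; omega

theorem RR_val {σ : ℕ → ℕ} {n f : ℕ} {S : Finset ℕ} (hinj : Set.InjOn σ S)
    (hlt : ∀ g ∈ S, σ g < n) {v v'} (hv : fvC v ⊆ S) (hv' : fvC v' ⊆ S)
    (hf : f ∉ fvC v) (hf' : f ∉ fvC v')
    (h : WB (contS [.funI (renT σ v)] (.fvar n) (n + 1))
      (contS [.funI (renT σ v')] (.fvar n) (n + 1))) :
    RR (.cont [.funI v] (.fvar f)) (.cont [.funI v'] (.fvar f)) := by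
  refine RR_mk (f := f) hinj hlt (fun g hg => ?_) ?_
  · have h1 := @hv g
    have h2 := @hv' g
    simp only [fvConf, fvSt, fvItem, fvC, Finset.mem_union, Finset.mem_singleton,
      Finset.notMem_empty] at hg
    tauto
  · simp only [renC, renS, renI, renT, Function.update_self, renT_congr (upd_congr hf),
      renT_congr (upd_congr hf'), emb]
    exact h

theorem RR_ctx {σ : ℕ → ℕ} {n f : ℕ} {S : Finset ℕ} (hinj : Set.InjOn σ S)
    (hlt : ∀ g ∈ S, σ g < n) {π π'} (hv : fvSt π ⊆ S) (hv' : fvSt π' ⊆ S)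
    (hf : f ∉ fvSt π) (hf' : f ∉ fvSt π')
    (h : WB (contS (renS σ π) (.fvar n) (n + 1)) (contS (renS σ π') (.fvar n) (n + 1))) :
    RR (.cont π (.fvar f)) (.cont π' (.fvar f)) := by
  refine RR_mk (f := f) hinj hlt (fun g hg => ?_) ?_
  · have h1 := @hv g
    have h2 := @hv' g
    simp only [fvConf, fvC, Finset.mem_union, Finset.mem_singleton] at hg
    tauto
  · simp only [renC, renT, Function.update_self, renS_congr (upd_congr hf),
      renS_congr (upd_congr hf'), emb]
    exact h

theorem RR_isNF : IsNFBisimV RR := by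
  refine ⟨?_, ?_⟩
  · rintro C C' ⟨σ, n, h1, h2, h3⟩
    refine ⟨σ, n, ?_, ?_, h3.symm⟩
    · rwa [Finset.union_comm]
    · rwa [Finset.union_comm]
  · rintro C C' ⟨σ, n, hinj, hlt, hw⟩
    refine ⟨fun v hC => ?_, fun f π v hC => ?_⟩
    · have w1 := (emb_steps_WB (ren_steps σ hC) n).symm.trans hw
      obtain ⟨y, ⟨u, w, h1, h2, h3⟩, h4⟩ := w1.flag (a := lamF) (YFlag.weak .lam)
      obtain ⟨D, h5, rfl⟩ := emb_taus h1
      obtain ⟨E, h6, rfl⟩ := ren_steps_inv h5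
      rcases emb_flag h2 with ⟨v1, h7, -, rfl⟩ | ⟨f, π, v, -, h⟩
      · obtain ⟨v', rfl, rfl⟩ := renC_nil_inv h7.symm
        have w2 := h4.trans (emb_taus_WB (C := .cont [.funI (renT σ v')] (.fvar n)) h3).symm
        refine ⟨v', h6, fun f hf => ?_⟩
        rw [Finset.mem_union, not_or] at hf
        refine RR_val hinj hlt ?_ ?_ hf.1 hf.2 w2
        · refine subset_trans ?_ ((fv_steps hC).trans Finset.subset_union_left)
          simp [fvConf]
        · refine subset_trans ?_ ((fv_steps h6).trans Finset.subset_union_right)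
          simp [fvConf]
      · rcases head_flag h with ⟨-, h, -⟩ | ⟨-, -, h, -⟩
        · exact absurd h (by decide)
        · exact absurd h (by decide)
    · have w1 : WB (headS (σ f) (renS σ π) (renT σ v) n) _ :=
        (emb_steps_WB (ren_steps σ hC) n).symm.trans hw
      have hfl : ∃ a y, a ≠ lamF ∧ YFlag (headS (σ f) (renS σ π) (renT σ v) n) a y := by
        cases σ f with
        | zero => exact ⟨_, _, by decide, .z⟩
        | succ g => exact ⟨_, _, by decide, .suc⟩
      obtain ⟨a, y0, ha, hfl⟩ := hfl
      obtain ⟨y, ⟨u, w, h1, h2, h3⟩, h4⟩ := w1.flag hfl.weak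
      obtain ⟨D, h5, rfl⟩ := emb_taus h1
      obtain ⟨E, h6, rfl⟩ := ren_steps_inv h5
      rcases emb_flag h2 with ⟨v1, -, h, -⟩ | ⟨f1, π1, v1, h7, -⟩
      · exact absurd h ha
      · obtain ⟨f', π', v', rfl, rfl, rfl, rfl⟩ := renC_head_inv h7.symm
        have w2 : WB _ (headS (σ f') (renS σ π') (renT σ v') n) := w1.trans (emb_steps_WB h5 n)
        obtain ⟨e, y1, h8, h9⟩ := head_WB w2
        have s1 := (fv_steps hC).trans (Finset.subset_union_left (s₂ := fvConf C'))
        have s2 := (fv_steps h6).trans (Finset.subset_union_right (s₁ := fvConf C))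
        simp only [fvConf, fvSt, fvItem, fvC, Finset.union_subset_iff,
          Finset.singleton_subset_iff] at s1 s2
        have e := hinj s1.1.1 s2.1.1 e
        subst e
        obtain ⟨w3, w4⟩ := zst_WB h8 h9
        refine ⟨π', v', h6, fun g hg => ?_⟩
        simp only [Finset.mem_union, not_or] at hg
        obtain ⟨⟨⟨g1, g2⟩, g3⟩, g4⟩ := hg
        exact ⟨RR_val hinj hlt s1.2 s2.2 g1 g2 w3, RR_ctx hinj hlt s1.1.2 s2.1.2 g3 g4 w4⟩

theorem main_equiv (t s : CTm) :
    NFBisimV (.ev t []) (.ev s []) ↔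
      ∃ n : ℕ, (∀ f ∈ fvC t ∪ fvC s, f < n) ∧
        BarbedEquiv HSetV (trEvV t [] n) (trEvV s [] n) := by
  constructor
  · rintro ⟨R, hR, h⟩
    have hlt : ∀ f ∈ fvC t ∪ fvC s, f < (fvC t ∪ fvC s).sup id + 1 := fun f hf =>
      Nat.lt_succ_of_le (Finset.le_sup (f := id) hf)
    refine ⟨_, hlt, (barbed_iff t s _).2 ⟨NX R, NX_isWB hR, ?_⟩⟩
    refine .conf (D := .ev t []) (D' := .ev s []) h .refl .refl ?_
    simpa [fvConf, fvSt] using hlt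
  · rintro ⟨n, hlt, h⟩
    refine ⟨RR, RR_isNF, id, n, Function.injective_id.injOn, ?_, ?_⟩
    · simpa [fvConf, fvSt] using hlt
    · simp only [renC, renS, renT_id, emb]
      exact (barbed_iff t s n).1 h

end HO


/-! ### Statement 17: full abstraction of HOcore w.r.t. call-by-value
normal-form bisimilarity -/

/-- `t ~nf s` iff there exists `n` greater than every free variable of `t` and
`s` such that `[[<t | [] | n>_ev]]` and `[[<s | [] | n>_ev]]` are barbed
equivalent w.r.t. `H`. -/
theorem hocore_fully_abstract_cbv_nf (t s : CTm) :
    NFBisimV (.ev t []) (.ev s []) ↔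
      ∃ n : ℕ, (∀ f ∈ fvC t ∪ fvC s, f < n) ∧
        BarbedEquiv HSetV (trEvV t [] n) (trEvV s [] n) := by
  exact HO.main_equiv t s
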